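/- arXiv:1309.6178 — 3 statements merged into one kernel-verified Lean document; each statement's English description precedes it below -/
import Mathlib

section
/- In the simplified model, the pre-averaged noise satisfies: (i) there are constants C > 0 and N such that for all n ≥ N and all 2 ≤ i, k ≤ m with |i − k| ≥ 2, |E[ε̄_{i,m} ε̄_{k,m}]| ≤ C/n; and (ii) there are constants C > 0 and N such that for all n ≥ N and all 2 ≤ i ≤ m, |E[ε̄_{i,m}²] − τ²(m/n)∫₀² λ(u)² du| ≤ C/n. -/
open MeasureTheory ProbabilityTheory Real

noncomputable section

/-- `Λ(u) = -∫₀ᵘ λ(v) dv`. -/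
def bigLam (lam : ℝ → ℝ) (u : ℝ) : ℝ := -∫ v in (0:ℝ)..u, lam v

/-- A (normalized) pre-average function: piecewise Lipschitz on `[0,2]`,
antisymmetric about `1`, and normalized. -/
structure IsPreAverageFn (lam : ℝ → ℝ) : Prop where
  piecewise_lipschitz : ∃ (N : ℕ) (t : ℕ → ℝ) (K : NNReal),
      0 < N ∧ t 0 = 0 ∧ t N = 2 ∧ (∀ i < N, t i < t (i + 1)) ∧
      ∀ i < N, LipschitzOnWith K lam (Set.Ioo (t i) (t (i + 1)))
  antisymm : ∀ t ∈ Set.Icc (0:ℝ) 1, lam t = - lam (2 - t)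
  normalized : Real.sqrt (2 * ∫ s in (0:ℝ)..1, (∫ u in (0:ℝ)..s, lam u) ^ 2) = 1

/-- `m = n / ⌊√n / c⌋`. -/
def mOf (c : ℝ) (n : ℕ) : ℕ := n / ⌊Real.sqrt n / c⌋₊

/-- The indices `j` with `j/n ∈ [(i-2)/m , i/m]`. -/
def blockIdx (n m i : ℕ) : Finset ℕ :=
  (Finset.range (n + 1)).filter fun j =>
    ((i : ℝ) - 2) / m ≤ (j : ℝ) / n ∧ (j : ℝ) / n ≤ (i : ℝ) / m

variable {Ω : Type*}

/-- Pre-averaged value `Ā_{i,m} = (m/n) ∑_{j/n ∈ [(i-2)/m, i/m]} λ(m j/n - (i-2)) A_j`. -/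
def preAvg (lam : ℝ → ℝ) (n m : ℕ) (A : ℕ → Ω → ℝ) (i : ℕ) (ω : Ω) : ℝ :=
  ((m : ℝ) / n) * ∑ j ∈ blockIdx n m i,
    lam ((m : ℝ) * j / n - ((i : ℝ) - 2)) * A j ω

/-- Bias correction `𝔟(λ, A)_{i,m}`. -/
def biasCorr (lam : ℝ → ℝ) (n m : ℕ) (A : ℕ → Ω → ℝ) (i : ℕ) (ω : Ω) : ℝ :=
  ((m : ℝ) ^ 2 / (2 * (n : ℝ) ^ 2)) * ∑ j ∈ (blockIdx n m i).filter (fun j => 1 ≤ j),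
    (lam ((m : ℝ) * j / n - ((i : ℝ) - 2))) ^ 2 * (A j ω - A (j - 1) ω) ^ 2

/-- The simplified model: `(W_{j/n})_j` and `(η_{j,n})_j` form a centered jointly Gaussian
family with `Cov(W_{j/n}, W_{l/n}) = min(j,l)/n`, `(η_{j,n})` standard Gaussian i.i.d.
and uncorrelated with the `W` grid values. -/
def IsSimplifiedModel [MeasureSpace Ω] (n : ℕ) (W η : ℕ → Ω → ℝ) : Prop :=
  (∀ j, Measurable (W j)) ∧ (∀ j, Measurable (η j)) ∧
  (∀ a b : ℕ → ℝ, ∃ v : NNReal,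
    Measure.map (fun ω => ∑ j ∈ Finset.range (n + 1), (a j * W j ω + b j * η j ω)) ℙ
      = gaussianReal 0 v) ∧
  (∀ j l, j ≤ n → l ≤ n → ∫ ω, W j ω * W l ω = (min j l : ℝ) / n) ∧
  (∀ j l, j ≤ n → l ≤ n → ∫ ω, η j ω * η l ω = if j = l then 1 else 0) ∧
  (∀ j l, j ≤ n → l ≤ n → ∫ ω, W j ω * η l ω = 0)

/-- The observations `Y_{j,n} = σ W_{j/n} + τ η_{j,n}`. -/
def obs (σ τ : ℝ) (W η : ℕ → Ω → ℝ) (j : ℕ) (ω : Ω) : ℝ := σ * W j ω + τ * η j ω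

end

/-- Increments of `G` are dominated by increments of a bounded function. -/
def BVDom (G : ℝ → ℝ) (V : ℝ → ℝ) (B : ℝ) : Prop :=
  (∀ x, |V x| ≤ B) ∧ ∀ x y, x ≤ y → |G y - G x| ≤ V y - V x

theorem BVDom.add {G H V W : ℝ → ℝ} {B C : ℝ} (h1 : BVDom G V B) (h2 : BVDom H W C) :
    BVDom (fun x => G x + H x) (fun x => V x + W x) (B + C) := by
  refine ⟨fun x => (abs_add_le _ _).trans (add_le_add (h1.1 x) (h2.1 x)), fun x y hxy => ?_⟩
  have a := h1.2 x y hxy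
  have b := h2.2 x y hxy
  rw [abs_le] at *
  constructor <;> linarith [a.1, a.2, b.1, b.2]

theorem bvDom_single (t a : ℝ) : ∃ V B, BVDom (Set.indicator {t} (fun _ => a)) V B := by
  refine ⟨fun x => |a| * ((if t ≤ x then 1 else 0) + (if t < x then 1 else 0)), |a| * 2,
    fun x => ?_, fun x y hxy => ?_⟩
  · rw [abs_mul, abs_abs]
    apply mul_le_mul_of_nonneg_left _ (abs_nonneg a)
    split_ifs <;> norm_num
  · have := abs_nonneg a
    simp only [Set.indicator_apply, Set.mem_singleton_iff]
    split_ifs <;> first | (exfalso; first | linarith | grind) | (simp <;> linarith)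

theorem bvDom_piece (f : ℝ → ℝ) (a b : ℝ) (hab : a < b) (K : NNReal)
    (hf : LipschitzOnWith K f (Set.Ioo a b)) :
    ∃ V B, BVDom (Set.indicator (Set.Ioo a b) f) V B := by
  have hlip : ∀ x y, a < x → x < b → a < y → y < b → x ≤ y → |f y - f x| ≤ K * (y - x) := by
    intro x y h1 h2 h3 h4 h5
    have := hf.dist_le_mul y ⟨h3, h4⟩ x ⟨h1, h2⟩
    rwa [Real.dist_eq, Real.dist_eq, abs_of_nonneg (sub_nonneg.2 h5)] at this
  have hK : (0:ℝ) ≤ K := K.2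
  obtain ⟨M, hM0, hM⟩ : ∃ M, 0 ≤ M ∧ ∀ x, a < x → x < b → |f x| ≤ M := by
    refine ⟨|f ((a+b)/2)| + K * (b - a), by have : 0 ≤ b - a := by linarith
                                            positivity, fun x h1 h2 => ?_⟩
    have h3 : |f x - f ((a+b)/2)| ≤ K * (b - a) := by
      rcases le_total x ((a+b)/2) with h | h
      · rw [abs_sub_comm]
        refine (hlip _ _ h1 h2 (by linarith) (by linarith) h).trans ?_
        apply mul_le_mul_of_nonneg_left _ hK; linarith
      · refine (hlip _ _ (by linarith) (by linarith) h1 h2 h).trans ?_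
        apply mul_le_mul_of_nonneg_left _ hK; linarith
    have := abs_sub_abs_le_abs_sub (f x) (f ((a+b)/2))
    linarith
  refine ⟨fun x => K * (max a (min x b)) + M * ((if a < x then 1 else 0) + (if b ≤ x then 1 else 0)),
    K * max |a| |b| + M * 2, fun x => ?_, fun x y hxy => ?_⟩
  · refine (abs_add_le _ _).trans (add_le_add ?_ ?_)
    · rw [abs_mul, abs_of_nonneg hK]
      apply mul_le_mul_of_nonneg_left _ hK
      rw [abs_le]
      have := neg_abs_le a
      have := le_abs_self b
      have := le_max_left |a| |b|
      have := le_max_right |a| |b|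
      constructor
      · exact le_trans (by linarith) (le_max_left _ _)
      · exact max_le (by linarith [le_abs_self a]) (le_trans (min_le_right _ _) (by linarith))
    · rw [abs_mul, abs_of_nonneg hM0]
      apply mul_le_mul_of_nonneg_left _ hM0
      split_ifs <;> norm_num
  · have hmono : (K:ℝ) * (max a (min x b)) ≤ K * (max a (min y b)) := by gcongr
    simp only [Set.indicator_apply, Set.mem_Ioo]
    by_cases hx : a < x ∧ x < b
    · by_cases hy : a < y ∧ y < b
      · rw [if_pos hx, if_pos hy, if_pos hx.1, if_pos hy.1, if_neg (not_le.2 hx.2),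
          if_neg (not_le.2 hy.2), min_eq_left hx.2.le, min_eq_left hy.2.le, max_eq_right hx.1.le,
          max_eq_right hy.1.le]
        have := hlip x y hx.1 hx.2 hy.1 hy.2 hxy
        linarith
      · have hby : b ≤ y := by
          by_contra h; exact hy ⟨by linarith, by linarith⟩
        have := hM x hx.1 hx.2
        rw [if_pos hx, if_neg hy, if_pos hx.1, if_pos (by linarith), if_neg (not_le.2 hx.2),
          if_pos hby, zero_sub, abs_neg]
        linarith
    · by_cases hy : a < y ∧ y < b
      · have hxa : x ≤ a := by
          by_contra h; exact hx ⟨by linarith, by linarith⟩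
        have := hM y hy.1 hy.2
        rw [if_neg hx, if_pos hy, if_neg (not_lt.2 hxa), if_neg (not_le.2 (hxa.trans_lt hab)), if_pos hy.1,
          if_neg (not_le.2 hy.2), sub_zero]
        linarith
      · rw [if_neg hx, if_neg hy, sub_zero, abs_zero]
        have : (((if a < x then 1 else 0) + (if b ≤ x then 1 else 0) : ℝ)) ≤
          ((if a < y then 1 else 0) + (if b ≤ y then 1 else 0)) := by
          split_ifs <;> first | (exfalso; linarith) | norm_num
        have := mul_le_mul_of_nonneg_left this hM0
        linarith

theorem bvDom_lam (lam : ℝ → ℝ) (hlam : IsPreAverageFn lam) :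
    ∃ V B, BVDom (Set.indicator (Set.Icc 0 2) lam) V B := by
  obtain ⟨N, t, K, hN, h0, h2, hlt, hL⟩ := hlam.piecewise_lipschitz
  have key : ∀ k ≤ N, 0 ≤ t k ∧ ∃ V B, BVDom (Set.indicator (Set.Icc 0 (t k)) lam) V B := by
    intro k
    induction k with
    | zero =>
      intro _
      refine ⟨h0.ge, ?_⟩
      obtain ⟨V, B, h⟩ := bvDom_single 0 (lam 0)
      refine ⟨V, B, ?_⟩
      convert h using 1
      ext x
      rw [h0, Set.Icc_self]
      simp only [Set.indicator_apply, Set.mem_singleton_iff]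
      split_ifs with hx
      · rw [hx]
      · rfl
    | succ k ih =>
      intro hk
      obtain ⟨hk0, V, B, hV⟩ := ih (by omega)
      have hl := hlt k (by omega)
      refine ⟨by linarith, ?_⟩
      obtain ⟨V1, B1, hV1⟩ := bvDom_piece lam _ _ hl K (hL k (by omega))
      obtain ⟨V2, B2, hV2⟩ := bvDom_single (t (k+1)) (lam (t (k+1)))
      refine ⟨fun x => (V x + V1 x) + V2 x, (B + B1) + B2, ?_⟩
      · convert (hV.add hV1).add hV2 using 1
        ext x
        simp only [Set.indicator_apply, Set.mem_singleton_iff, Set.mem_Icc, Set.mem_Ioo]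
        rcases lt_trichotomy x (t (k+1)) with h | h | h
        · by_cases hx : x ≤ t k
          · by_cases hx0 : 0 ≤ x
            · simp [hx, hx0, h.le, h.ne, not_lt.2 hx]
            · simp [hx0, h.ne, not_lt.2 hx]
          · simp [hx, h, h.le, h.ne, not_le.1 hx, hk0.trans (not_le.1 hx).le]
        · subst h
          simp [not_le.2 hl, hk0.trans hl.le]
        · simp [not_le.2 h, not_lt.2 h.le, h.ne', not_le.2 (hl.trans h)]
  rw [← h2]
  exact (key N le_rfl).2

theorem bvDom_sq (G V : ℝ → ℝ) (B : ℝ) (h : BVDom G V B) (M : ℝ) (hM : ∀ x, |G x| ≤ M) :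
    BVDom (fun x => G x ^ 2) (fun x => 2 * M * V x) (2 * M * B) := by
  have hM0 : 0 ≤ M := (abs_nonneg _).trans (hM 0)
  refine ⟨fun x => ?_, fun x y hxy => ?_⟩
  · rw [abs_mul, abs_of_nonneg (by positivity)]
    exact mul_le_mul_of_nonneg_left (h.1 x) (by positivity)
  · have h1 := h.2 x y hxy
    have : G y ^ 2 - G x ^ 2 = (G y + G x) * (G y - G x) := by ring
    rw [this, abs_mul, ← mul_sub]
    have h2 : |G y + G x| ≤ 2 * M := (abs_add_le _ _).trans (by linarith [hM x, hM y])
    exact mul_le_mul h2 h1 (abs_nonneg _) (by positivity)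

theorem BVDom.intervalIntegrable {G V : ℝ → ℝ} {B : ℝ} (h : BVDom G V B) (a b : ℝ) :
    IntervalIntegrable G volume a b := by
  have m1 : Monotone V := fun x y hxy => by
    have := (abs_nonneg _).trans (h.2 x y hxy); linarith
  have m2 : Monotone (fun x => V x - G x) := fun x y hxy => by
    have := (le_abs_self _).trans (h.2 x y hxy)
    show V x - G x ≤ V y - G y
    linarith
  have := (m1.intervalIntegrable (μ := volume) (a := a) (b := b)).sub m2.intervalIntegrable
  convert this using 1
  ext x; simp

theorem BVDom.riemann {G V : ℝ → ℝ} {B : ℝ} (hG : BVDom G V B) (x0 h : ℝ) (hh : 0 ≤ h) (k : ℕ) :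
    |h * ∑ j ∈ Finset.range k, G (x0 + h * j) - ∫ u in x0..(x0 + h * k), G u| ≤ h * (2 * B) := by
  have hs := intervalIntegral.sum_integral_adjacent_intervals (f := G) (μ := volume)
    (a := fun j : ℕ => x0 + h * j) (n := k) (fun j _ => hG.intervalIntegrable _ _)
  simp only [Nat.cast_zero, mul_zero, add_zero] at hs
  rw [← hs, Finset.mul_sum, ← Finset.sum_sub_distrib]
  have hb : ∀ j ∈ Finset.range k,
      |h * G (x0 + h * j) - ∫ u in (x0 + h * j)..(x0 + h * (j + 1 : ℕ)), G u| ≤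
        h * (V (x0 + h * (j + 1 : ℕ)) - V (x0 + h * j)) := by
    intro j _
    have hle : x0 + h * j ≤ x0 + h * (j + 1 : ℕ) := by push_cast; nlinarith
    have e : h * G (x0 + h * j) - ∫ u in (x0 + h * j)..(x0 + h * (j + 1 : ℕ)), G u
        = ∫ u in (x0 + h * j)..(x0 + h * (j + 1 : ℕ)), (G (x0 + h * j) - G u) := by
      rw [intervalIntegral.integral_sub (by simp) (hG.intervalIntegrable _ _),
        intervalIntegral.integral_const]
      push_cast
      simp only [smul_eq_mul]
      ring
    rw [e, ← Real.norm_eq_abs]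
    refine (intervalIntegral.norm_integral_le_of_norm_le_const
      (C := V (x0 + h * (j + 1 : ℕ)) - V (x0 + h * j)) ?_).trans ?_
    · intro u hu
      rw [Set.uIoc_of_le hle] at hu
      have h1 := hG.2 _ u hu.1.le
      have h2 := (abs_nonneg _).trans (hG.2 u _ hu.2)
      rw [Real.norm_eq_abs, abs_sub_comm]
      linarith
    · rw [abs_of_nonneg (by linarith)]
      apply le_of_eq; push_cast; ring
  refine (Finset.abs_sum_le_sum_abs _ _).trans ((Finset.sum_le_sum hb).trans ?_)
  rw [← Finset.mul_sum, Finset.sum_range_sub (fun j : ℕ => V (x0 + h * j))]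
  apply mul_le_mul_of_nonneg_left _ hh
  have h1 := abs_le.1 (hG.1 (x0 + h * k))
  have h2 := abs_le.1 (hG.1 (x0 + h * (0:ℕ)))
  linarith [h1.2, h2.1]

theorem integral_indicator_Icc (f : ℝ → ℝ) (a b : ℝ) (ha : a ≤ 0) (hb : 2 ≤ b)
    (hi : ∀ a b, IntervalIntegrable (Set.indicator (Set.Icc 0 2) f) volume a b) :
    ∫ u in a..b, Set.indicator (Set.Icc 0 2) f u = ∫ u in (0:ℝ)..2, f u := by
  rw [← intervalIntegral.integral_add_adjacent_intervals (hi a 0) (hi 0 b),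
    ← intervalIntegral.integral_add_adjacent_intervals (hi 0 2) (hi 2 b)]
  have e1 : ∫ u in a..0, Set.indicator (Set.Icc 0 2) f u = 0 := by
    apply intervalIntegral.integral_zero_ae
    have : ∀ᵐ x : ℝ, x ≠ 0 := by simp [ae_iff]
    filter_upwards [this] with x hx hx'
    rw [Set.uIoc_of_le ha] at hx'
    apply Set.indicator_of_notMem
    intro h
    exact hx (le_antisymm hx'.2 h.1)
  have e2 : ∫ u in (2:ℝ)..b, Set.indicator (Set.Icc 0 2) f u = 0 := by
    apply intervalIntegral.integral_zero_ae
    filter_upwards with x hx'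
    rw [Set.uIoc_of_le hb] at hx'
    apply Set.indicator_of_notMem
    intro h
    linarith [hx'.1, h.2]
  have e3 : ∫ u in (0:ℝ)..2, Set.indicator (Set.Icc 0 2) f u = ∫ u in (0:ℝ)..2, f u := by
    apply intervalIntegral.integral_congr
    intro x hx
    rw [Set.uIcc_of_le (by norm_num)] at hx
    exact Set.indicator_of_mem hx f
  rw [e1, e2, e3]; ring

theorem model_memLp {Ω : Type*} [MeasureSpace Ω] [IsProbabilityMeasure (ℙ : Measure Ω)] (n : ℕ)
    (W η : ℕ → Ω → ℝ) (h : IsSimplifiedModel n W η) (j : ℕ) (hj : j ≤ n) :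
    MemLp (η j) 2 ℙ := by
  obtain ⟨hW, hη, hg, -⟩ := h
  obtain ⟨v, hv⟩ := hg (fun _ => 0) (fun l => if l = j then 1 else 0)
  have e : (fun ω => ∑ l ∈ Finset.range (n + 1),
      ((0:ℝ) * W l ω + (if l = j then 1 else 0) * η l ω)) = η j := by
    ext ω
    simp [Finset.sum_ite_eq', Nat.lt_succ_of_le hj]
  rw [e] at hv
  have h2 : MemLp id 2 (Measure.map (η j) ℙ) := by
    rw [hv]; exact memLp_id_gaussianReal' 2 (by norm_num)
  exact (memLp_map_measure_iff aestronglyMeasurable_id (hη j).aemeasurable).1 h2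

theorem model_cov {Ω : Type*} [MeasureSpace Ω] [IsProbabilityMeasure (ℙ : Measure Ω)] (n m : ℕ)
    (W η : ℕ → Ω → ℝ) (h : IsSimplifiedModel n W η) (lam : ℝ → ℝ) (τ : ℝ) (i k : ℕ) :
    ∫ ω, preAvg lam n m (fun j ω => τ * η j ω) i ω * preAvg lam n m (fun j ω => τ * η j ω) k ω
      = τ ^ 2 * ((m : ℝ) / n) ^ 2 * ∑ j ∈ blockIdx n m i ∩ blockIdx n m k,
        lam ((m : ℝ) * j / n - ((i : ℝ) - 2)) * lam ((m : ℝ) * j / n - ((k : ℝ) - 2)) := by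
  have hle : ∀ i, ∀ j ∈ blockIdx n m i, j ≤ n := by
    intro i j hj
    simp only [blockIdx, Finset.mem_filter, Finset.mem_range] at hj
    omega
  have hint : ∀ j l, j ≤ n → l ≤ n → Integrable (fun ω => η j ω * η l ω) ℙ := fun j l hj hl =>
    (model_memLp n W η h j hj).integrable_mul (model_memLp n W η h l hl)
  have hcov := h.2.2.2.2.1
  have e : ∀ ω, preAvg lam n m (fun j ω => τ * η j ω) i ω
        * preAvg lam n m (fun j ω => τ * η j ω) k ω
      = ∑ j ∈ blockIdx n m i, ∑ l ∈ blockIdx n m k, (τ ^ 2 * ((m : ℝ) / n) ^ 2 *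
        (lam ((m : ℝ) * j / n - ((i : ℝ) - 2)) * lam ((m : ℝ) * l / n - ((k : ℝ) - 2)))) *
        (η j ω * η l ω) := by
    intro ω
    unfold preAvg
    rw [mul_mul_mul_comm, Finset.sum_mul_sum, Finset.mul_sum]
    refine Finset.sum_congr rfl fun j _ => ?_
    rw [Finset.mul_sum]
    refine Finset.sum_congr rfl fun l _ => ?_
    ring
  simp_rw [e]
  rw [integral_finsetSum]
  swap
  · intro j hj
    exact integrable_finsetSum _ fun l hl => (hint j l (hle _ _ hj) (hle _ _ hl)).const_mul _
  have e2 : ∀ j ∈ blockIdx n m i, (∫ ω, ∑ l ∈ blockIdx n m k, (τ ^ 2 * ((m : ℝ) / n) ^ 2 *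
        (lam ((m : ℝ) * j / n - ((i : ℝ) - 2)) * lam ((m : ℝ) * l / n - ((k : ℝ) - 2)))) *
        (η j ω * η l ω)) = if j ∈ blockIdx n m k then τ ^ 2 * ((m : ℝ) / n) ^ 2 *
        (lam ((m : ℝ) * j / n - ((i : ℝ) - 2)) * lam ((m : ℝ) * j / n - ((k : ℝ) - 2))) else 0 := by
    intro j hj
    rw [integral_finsetSum _ fun l hl => (hint j l (hle _ _ hj) (hle _ _ hl)).const_mul _]
    rw [← Finset.sum_ite_eq (blockIdx n m k) j (fun l => τ ^ 2 * ((m : ℝ) / n) ^ 2 *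
        (lam ((m : ℝ) * j / n - ((i : ℝ) - 2)) * lam ((m : ℝ) * l / n - ((k : ℝ) - 2))))]
    refine Finset.sum_congr rfl fun l hl => ?_
    rw [integral_const_mul, hcov j l (hle _ _ hj) (hle _ _ hl)]
    split_ifs <;> simp
  rw [Finset.sum_congr rfl e2, ← Finset.sum_filter, Finset.filter_mem_eq_inter, Finset.mul_sum]

theorem h_bound (c : ℝ) (hc : 0 < c) (n : ℕ) (hn : c ^ 2 < n) :
    ((mOf c n : ℝ) / n) ^ 2 ≤ 4 * c ^ 2 / n := by
  have hn0 : (0:ℝ) < n := lt_of_le_of_lt (sq_nonneg c) hn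
  have hs : c ≤ √n := Real.le_sqrt_of_sq_le hn.le
  have hx : 1 ≤ √n / c := by rwa [le_div_iff₀ hc, one_mul]
  have hp1 : (1:ℝ) ≤ ⌊√n / c⌋₊ := by
    exact_mod_cast (Nat.one_le_floor_iff _).2 hx
  have hp : √n / c < ⌊√n / c⌋₊ + 1 := Nat.lt_floor_add_one _
  have hp2 : √n / c ≤ 2 * (⌊√n / c⌋₊ : ℝ) := by linarith
  have hm : (mOf c n : ℝ) ≤ n / (⌊√n / c⌋₊ : ℝ) := Nat.cast_div_le
  rw [le_div_iff₀ (by linarith)] at hm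
  rw [div_le_iff₀ hc] at hp2
  have hq : (mOf c n : ℝ) * √n ≤ 2 * c * n := by
    have h0 : (0:ℝ) ≤ mOf c n := Nat.cast_nonneg _
    nlinarith [mul_le_mul_of_nonneg_left hp2 h0, mul_le_mul_of_nonneg_left hm hc.le]
  have hq2 : ((mOf c n : ℝ) * √n) ^ 2 ≤ (2 * c * n) ^ 2 :=
    pow_le_pow_left₀ (by positivity) hq 2
  rw [mul_pow, Real.sq_sqrt hn0.le] at hq2
  rw [div_pow, div_le_div_iff₀ (by positivity) hn0]
  nlinarith

theorem mem_block (n m i j : ℕ) (hn : 0 < n) (hm : 0 < m) (him : i ≤ m) :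
    j ∈ blockIdx n m i ↔ j ∈ Finset.range (n + 1) ∧
      (m : ℝ) * j / n - ((i : ℝ) - 2) ∈ Set.Icc (0:ℝ) 2 := by
  have hn' : (0:ℝ) < n := by exact_mod_cast hn
  have hm' : (0:ℝ) < m := by exact_mod_cast hm
  simp only [blockIdx, Finset.mem_filter, Set.mem_Icc]
  have e : (m : ℝ) * j / n = m * (j / n) := by ring
  rw [div_le_iff₀ hm', le_div_iff₀ hm', e]
  constructor <;> rintro ⟨h1, h2, h3⟩ <;> exact ⟨h1, by linarith, by linarith⟩

theorem preAveragedNoise_second_moments (σ τ c : ℝ) (hσ : 0 < σ) (hτ : 0 < τ) (hc : 0 < c)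
    (lam : ℝ → ℝ) (hlam : IsPreAverageFn lam)
    (Ω : ℕ → Type*) [∀ n, MeasureSpace (Ω n)] [∀ n, IsProbabilityMeasure (ℙ : Measure (Ω n))]
    (W η : (n : ℕ) → ℕ → Ω n → ℝ)
    (hmodel : ∀ n, IsSimplifiedModel n (W n) (η n)) :
    (∃ C > 0, ∃ N : ℕ, ∀ n ≥ N, ∀ i k : ℕ, 2 ≤ i → i ≤ mOf c n → 2 ≤ k → k ≤ mOf c n →
      2 ≤ |(i : ℤ) - (k : ℤ)| →
      |∫ ω, preAvg lam n (mOf c n) (fun j ω => τ * η n j ω) i ω *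
            preAvg lam n (mOf c n) (fun j ω => τ * η n j ω) k ω| ≤ C / n) ∧
    (∃ C > 0, ∃ N : ℕ, ∀ n ≥ N, ∀ i : ℕ, 2 ≤ i → i ≤ mOf c n →
      |(∫ ω, (preAvg lam n (mOf c n) (fun j ω => τ * η n j ω) i ω) ^ 2)
          - τ ^ 2 * ((mOf c n : ℝ) / n) * ∫ u in (0:ℝ)..2, (lam u) ^ 2| ≤ C / n) := by
  obtain ⟨V, B, hV⟩ := bvDom_lam lam hlam
  set G := Set.indicator (Set.Icc (0:ℝ) 2) lam with hGdef
  have hM : ∀ x, |G x| ≤ 2 * B := by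
    have hneg : ∀ x < 0, G x = 0 := fun x hx =>
      Set.indicator_of_notMem (fun h => by linarith [h.1]) _
    intro x
    have h0 := hV.1 x
    rcases lt_or_ge x 0 with hx | hx
    · rw [hneg x hx, abs_zero]; linarith [abs_nonneg (V x)]
    · have h1 := hV.2 (-1) x (by linarith)
      rw [hneg (-1) (by norm_num), sub_zero] at h1
      linarith [(abs_le.1 h0).2, (abs_le.1 (hV.1 (-1))).1]
  have hB : 0 ≤ B := (abs_nonneg _).trans (hV.1 0)
  have hsq := bvDom_sq G V B hV _ hM
  have hGin : ∀ x ∈ Set.Icc (0:ℝ) 2, G x = lam x := fun x hx => Set.indicator_of_mem hx _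
  obtain ⟨N, hN⟩ := exists_nat_gt (c ^ 2)
  constructor
  · refine ⟨τ ^ 2 * (4 * c ^ 2) * ((2 * B) * (2 * B)) + 1, by positivity, N, ?_⟩
    intro n hn i k hi him hk hkm hik
    have hcn : c ^ 2 < n := hN.trans_le (by exact_mod_cast hn)
    have hn0 : (0:ℝ) < n := lt_of_le_of_lt (sq_nonneg c) hcn
    have hn0' : 0 < n := by exact_mod_cast hn0
    have hm0 : 0 < mOf c n := by omega
    have hm0' : (0:ℝ) < mOf c n := by exact_mod_cast hm0
    have hb := h_bound c hc n hcn
    rw [model_cov n _ _ _ (hmodel n)]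
    set m := mOf c n
    have hcard : (blockIdx n m i ∩ blockIdx n m k).card ≤ 1 := by
      rw [Finset.card_le_one]
      have key : ∀ a ∈ blockIdx n m i ∩ blockIdx n m k,
          (m : ℝ) * a / n = min (i:ℝ) k := by
        intro a ha
        rw [Finset.mem_inter, mem_block n m i a hn0' hm0 him, mem_block n m k a hn0' hm0 hkm] at ha
        obtain ⟨⟨-, h1, h2⟩, -, h3, h4⟩ := ha
        rcases le_abs.1 hik with h | h
        · have : (k:ℝ) + 2 ≤ i := by
            have : k + 2 ≤ i := by omega
            exact_mod_cast this
          rw [min_eq_right (by linarith)]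
          linarith
        · have : (i:ℝ) + 2 ≤ k := by
            have : i + 2 ≤ k := by omega
            exact_mod_cast this
          rw [min_eq_left (by linarith)]
          linarith
      intro a ha b hb
      have := (key a ha).trans (key b hb).symm
      rw [div_left_inj' hn0.ne', mul_right_inj' hm0'.ne'] at this
      exact_mod_cast this
    have hsum : |∑ j ∈ blockIdx n m i ∩ blockIdx n m k,
        lam ((m : ℝ) * j / n - ((i : ℝ) - 2)) * lam ((m : ℝ) * j / n - ((k : ℝ) - 2))|
        ≤ (2 * B) * (2 * B) := by
      refine (Finset.abs_sum_le_sum_abs _ _).trans ?_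
      refine (Finset.sum_le_card_nsmul _ _ ((2 * B) * (2 * B)) ?_).trans ?_
      · intro a ha
        rw [Finset.mem_inter, mem_block n m i a hn0' hm0 him, mem_block n m k a hn0' hm0 hkm] at ha
        rw [abs_mul, ← hGin _ ha.1.2, ← hGin _ ha.2.2]
        exact mul_le_mul (hM _) (hM _) (abs_nonneg _) (by positivity)
      · rw [nsmul_eq_mul]
        have : ((blockIdx n m i ∩ blockIdx n m k).card : ℝ) ≤ 1 := by exact_mod_cast hcard
        exact mul_le_of_le_one_left (by positivity) this
    rw [abs_mul, abs_of_nonneg (by positivity)]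
    calc _ ≤ τ ^ 2 * (4 * c ^ 2 / n) * ((2 * B) * (2 * B)) := by gcongr
      _ = (τ ^ 2 * (4 * c ^ 2) * ((2 * B) * (2 * B))) / n := by ring
      _ ≤ _ := by gcongr; linarith
  · set D := 2 * (2 * (2 * B) * B) with hD
    refine ⟨τ ^ 2 * (4 * c ^ 2) * D + 1, by positivity, N, ?_⟩
    intro n hn i hi him
    have hcn : c ^ 2 < n := hN.trans_le (by exact_mod_cast hn)
    have hn0 : (0:ℝ) < n := lt_of_le_of_lt (sq_nonneg c) hcn
    have hn0' : 0 < n := by exact_mod_cast hn0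
    have hm0 : 0 < mOf c n := by omega
    have hm0' : (0:ℝ) < mOf c n := by exact_mod_cast hm0
    have hb := h_bound c hc n hcn
    simp_rw [pow_two (preAvg _ _ _ _ _ _)]
    rw [model_cov n _ _ _ (hmodel n), Finset.inter_self]
    set m := mOf c n
    set h : ℝ := (m : ℝ) / n with hh
    have hhpos : 0 < h := by positivity
    have hR := hsq.riemann (2 - (i:ℝ)) h hhpos.le (n + 1)
    have hGsq : (fun x => G x ^ 2) = Set.indicator (Set.Icc (0:ℝ) 2) (fun x => lam x ^ 2) := by
      ext x
      simp only [hGdef, Set.indicator_apply]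
      split_ifs <;> simp
    have hI : ∫ u in (2 - (i:ℝ))..(2 - (i:ℝ) + h * (n + 1 : ℕ)), G u ^ 2
        = ∫ u in (0:ℝ)..2, lam u ^ 2 := by
      rw [hGsq] at hsq
      have := integral_indicator_Icc (fun x => lam x ^ 2) (2 - (i:ℝ))
        (2 - (i:ℝ) + h * (n + 1 : ℕ)) ?_ ?_ hsq.intervalIntegrable
      · rw [← this, ← hGsq]
      · have : (2:ℝ) ≤ i := by exact_mod_cast hi
        linarith
      · have : (i:ℝ) ≤ m := by exact_mod_cast him
        have e : h * n = m := by rw [hh]; field_simp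
        push_cast
        nlinarith
    have hS : ∑ j ∈ blockIdx n m i,
        lam ((m : ℝ) * j / n - ((i : ℝ) - 2)) * lam ((m : ℝ) * j / n - ((i : ℝ) - 2))
        = ∑ j ∈ Finset.range (n + 1), G (2 - (i:ℝ) + h * j) ^ 2 := by
      have hx : ∀ j : ℕ, 2 - (i:ℝ) + h * j = (m : ℝ) * j / n - ((i : ℝ) - 2) := by
        intro j; rw [hh]; ring
      have hsub : blockIdx n m i ⊆ Finset.range (n + 1) := Finset.filter_subset _ _
      rw [← Finset.sum_subset hsub]
      · refine Finset.sum_congr rfl fun j hj => ?_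
        rw [mem_block n m i j hn0' hm0 him] at hj
        rw [hx, hGin _ hj.2, pow_two]
      · intro j hj hj'
        rw [mem_block n m i j hn0' hm0 him] at hj'
        rw [hx, hGdef, Set.indicator_of_notMem (fun h => hj' ⟨hj, h⟩)]
        norm_num
    rw [hS]
    rw [hI] at hR
    rw [show τ ^ 2 * h ^ 2 * ∑ j ∈ Finset.range (n + 1), G (2 - (i:ℝ) + h * j) ^ 2
        - τ ^ 2 * h * ∫ u in (0:ℝ)..2, lam u ^ 2
        = τ ^ 2 * h * (h * ∑ j ∈ Finset.range (n + 1), G (2 - (i:ℝ) + h * j) ^ 2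
        - ∫ u in (0:ℝ)..2, lam u ^ 2) by ring]
    rw [abs_mul, abs_of_nonneg (by positivity)]
    calc _ ≤ τ ^ 2 * h * (h * D) := by gcongr
      _ = τ ^ 2 * h ^ 2 * D := by ring
      _ ≤ τ ^ 2 * (4 * c ^ 2 / n) * D := by gcongr
      _ = (τ ^ 2 * (4 * c ^ 2) * D) / n := by ring
      _ ≤ _ := by gcongr; linarith
end

section
/- In the simplified model, there are constants C > 0 and N such that for all n ≥ N and all 2 ≤ i ≤ m − 1, the pre-averaged Brownian parts on adjacent blocks satisfy |E[X̄_{i,m} X̄_{i+1,m}] − (σ²/m)∫₀¹ Λ(u)Λ(1−u) du| ≤ C/n, uniformly in i. -/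
open MeasureTheory ProbabilityTheory Real

theorem lip_riemann (g : ℝ → ℝ) (K : NNReal) (hg : LipschitzWith K g) :
    ∃ C : ℝ, 0 ≤ C ∧ ∀ h : ℝ, 0 < h → h ≤ 1 → ∀ a : ℝ, 0 ≤ a → ∀ p q : ℝ, 0 ≤ p → p ≤ q → q ≤ 2 →
      |h * ∑ j ∈ Finset.Ico ⌈(p + a) / h⌉₊ ⌈(q + a) / h⌉₊, g (h * j - a) - ∫ x in p..q, g x|
        ≤ C * h := by
  set B : ℝ := |g 0| + 3 * K with hB
  have hBb : ∀ x, 0 ≤ x → x ≤ 3 → |g x| ≤ B := by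
    intro x h0 h3
    have := hg.dist_le_mul x 0
    rw [Real.dist_eq, Real.dist_eq, sub_zero, abs_of_nonneg h0] at this
    have h1 := abs_sub_abs_le_abs_sub (g x) (g 0)
    have : (K:ℝ) * x ≤ K * 3 := by gcongr
    linarith
  have hgi : ∀ a b : ℝ, IntervalIntegrable g volume a b := fun a b =>
    hg.continuous.intervalIntegrable a b
  have hB0 : 0 ≤ B := by positivity
  refine ⟨3 * K + 2 * B, by positivity, ?_⟩
  intro h hh h1 a ha p q hp hpq hq
  set k0 := ⌈(p + a) / h⌉₊ with hk0
  set k1 := ⌈(q + a) / h⌉₊ with hk1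
  have hk : k0 ≤ k1 := Nat.ceil_mono (by gcongr)
  set x : ℕ → ℝ := fun j => h * j - a with hx
  have ceil_bd : ∀ r : ℝ, 0 ≤ r → r ≤ x ⌈(r + a) / h⌉₊ ∧ x ⌈(r + a) / h⌉₊ ≤ r + h := by
    intro r hr
    have e1 := Nat.le_ceil ((r + a) / h)
    have e2 := (Nat.ceil_lt_add_one (a := (r + a) / h) (by positivity)).le
    rw [div_le_iff₀ hh] at e1
    have e3 : h * (⌈(r + a) / h⌉₊ : ℝ) ≤ h * ((r + a) / h + 1) := by gcongr
    have e4 : h * ((r + a) / h + 1) = r + a + h := by field_simp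
    simp only [hx]
    constructor <;> nlinarith
  obtain ⟨a0, a1⟩ := ceil_bd p hp
  obtain ⟨b0, b1⟩ := ceil_bd q (hp.trans hpq)
  rw [← hk0] at a0 a1
  rw [← hk1] at b0 b1
  have hsum : ∑ j ∈ Finset.Ico k0 k1, ∫ y in x j..x (j+1), g y = ∫ y in x k0..x k1, g y :=
    intervalIntegral.sum_integral_adjacent_intervals_Ico hk (fun k _ => hgi _ _)
  have hstep : ∀ j, x (j+1) - x j = h := by intro j; simp only [hx]; push_cast; ring
  have hcell : ∀ j ∈ Finset.Ico k0 k1, |h * g (x j) - ∫ y in x j..x (j+1), g y| ≤ K * h * h := by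
    intro j _
    have e : h * g (x j) - ∫ y in x j..x (j+1), g y = ∫ y in x j..x (j+1), (g (x j) - g y) := by
      rw [intervalIntegral.integral_sub (by simp) (hgi _ _), intervalIntegral.integral_const, hstep]
      simp
    rw [e]
    have := intervalIntegral.norm_integral_le_of_norm_le_const (a := x j) (b := x (j+1))
      (f := fun y => g (x j) - g y) (C := K * h) ?_
    · rw [hstep, abs_of_pos hh] at this
      exact this
    · intro y hy
      rw [Set.uIoc_of_le (by linarith [hstep j])] at hy
      have := hg.dist_le_mul (x j) y
      rw [Real.dist_eq, Real.dist_eq] at this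
      refine this.trans ?_
      gcongr
      rw [abs_sub_comm, abs_of_pos (by linarith [hy.1])]
      linarith [hy.2, hstep j]
  have hS : |h * ∑ j ∈ Finset.Ico k0 k1, g (x j) - ∫ y in x k0..x k1, g y| ≤ 3 * K * h := by
    rw [← hsum, Finset.mul_sum, ← Finset.sum_sub_distrib]
    refine (Finset.abs_sum_le_sum_abs _ _).trans ((Finset.sum_le_sum hcell).trans ?_)
    rw [Finset.sum_const, nsmul_eq_mul, Nat.card_Ico, Nat.cast_sub hk]
    have : ((k1:ℝ) - k0) * h ≤ 3 := by
      have : ((k1:ℝ) - k0) * h = x k1 - x k0 := by simp only [hx]; ring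
      linarith
    calc ((k1:ℝ) - k0) * (K * h * h) = (((k1:ℝ) - k0) * h) * (K * h) := by ring
      _ ≤ 3 * (K * h) := by gcongr
      _ = _ := by ring
  have hend : ∀ r s : ℝ, 0 ≤ r → r ≤ 2 → r ≤ s → s ≤ r + h → |∫ y in r..s, g y| ≤ B * h := by
    intro r s hr hr2 hrs hs
    have := intervalIntegral.norm_integral_le_of_norm_le_const (a := r) (b := s)
      (f := g) (C := B) ?_
    · refine this.trans ?_
      gcongr
      rw [abs_of_nonneg (by linarith)]; linarith
    · intro y hy
      rw [Set.uIoc_of_le hrs] at hy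
      exact hBb y (by linarith [hy.1]) (by linarith [hy.2])
  have e1 := hend p (x k0) hp (by linarith) a0 a1
  have e2 := hend q (x k1) (by linarith) hq b0 b1
  have e3 : ∫ y in p..q, g y = (∫ y in p..x k0, g y) + (∫ y in x k0..x k1, g y)
      - ∫ y in q..x k1, g y := by
    rw [intervalIntegral.integral_add_adjacent_intervals (hgi _ _) (hgi _ _),
      ← intervalIntegral.integral_add_adjacent_intervals (hgi p q) (hgi q (x k1))]
    ring
  rw [e3]
  rw [abs_le] at *
  constructor <;> nlinarith [e1.1, e1.2, e2.1, e2.2, hS.1, hS.2]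

theorem piece_riemann (lam : ℝ → ℝ) (K : NNReal) (p q : ℝ) (hp : 0 ≤ p) (hpq : p < q) (hq : q ≤ 2)
    (hl : LipschitzOnWith K lam (Set.Ioo p q)) :
    IntervalIntegrable lam volume p q ∧
    ∃ C : ℝ, 0 ≤ C ∧ ∀ h : ℝ, 0 < h → h ≤ 1 → ∀ a : ℝ, 0 ≤ a → ∀ u : ℝ, p ≤ u → u ≤ q →
      |h * ∑ j ∈ Finset.Ico ⌈(u + a) / h⌉₊ ⌈(q + a) / h⌉₊, lam (h * j - a) - ∫ x in u..q, lam x|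
        ≤ C * h := by
  obtain ⟨g, hg, hgl⟩ := hl.extend_real
  obtain ⟨C, hC, H⟩ := lip_riemann g K hg
  constructor
  · have := hg.continuous.intervalIntegrable (μ := volume) p q
    rw [intervalIntegrable_iff_integrableOn_Ioo_of_le hpq.le] at this ⊢
    exact this.congr_fun (fun x hx => (hgl hx).symm) measurableSet_Ioo
  refine ⟨C + |lam p - g p|, by positivity, ?_⟩
  intro h hh h1 a ha u hpu huq
  have h0 := H h hh h1 a ha u q (hp.trans hpu) huq hq
  have e1 : ∫ x in u..q, lam x = ∫ x in u..q, g x := by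
    rw [intervalIntegral.integral_of_le huq, intervalIntegral.integral_of_le huq,
      integral_Ioc_eq_integral_Ioo, integral_Ioc_eq_integral_Ioo]
    exact setIntegral_congr_fun measurableSet_Ioo
      (fun x hx => hgl ⟨lt_of_le_of_lt hpu hx.1, hx.2⟩)
  have e2 : |∑ j ∈ Finset.Ico ⌈(u + a) / h⌉₊ ⌈(q + a) / h⌉₊, lam (h * j - a)
     - ∑ j ∈ Finset.Ico ⌈(u + a) / h⌉₊ ⌈(q + a) / h⌉₊, g (h * j - a)| ≤ |lam p - g p| := by
    rw [← Finset.sum_sub_distrib]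
    set k := ⌈(u + a) / h⌉₊ with hk
    by_cases hkm : k < ⌈(q + a) / h⌉₊
    · rw [Finset.sum_eq_sum_Ico_succ_bot hkm, Finset.sum_eq_zero, add_zero]
      · have l1 : (u + a) / h ≤ k := Nat.le_ceil _
        have l2 : (k:ℝ) < (q + a) / h := Nat.lt_ceil.1 hkm
        rw [div_le_iff₀ hh] at l1
        rw [lt_div_iff₀ hh] at l2
        rcases eq_or_lt_of_le (show p ≤ h * k - a by linarith) with e | e
        · rw [← e]
        · rw [hgl ⟨e, by linarith⟩]; simp
      · intro j hj
        rw [Finset.mem_Ico] at hj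
        have l1 : (u + a) / h ≤ k := Nat.le_ceil _
        have l2 : (j:ℝ) < (q + a) / h := Nat.lt_ceil.1 hj.2
        rw [div_le_iff₀ hh] at l1
        rw [lt_div_iff₀ hh] at l2
        have l3 : (k:ℝ) + 1 ≤ j := by exact_mod_cast hj.1
        rw [hgl ⟨by nlinarith, by linarith⟩]; simp
    · rw [Finset.Ico_eq_empty_of_le (by omega)]; simp
  rw [e1]
  set A := ∑ j ∈ Finset.Ico ⌈(u + a) / h⌉₊ ⌈(q + a) / h⌉₊, lam (h * j - a)
  set A' := ∑ j ∈ Finset.Ico ⌈(u + a) / h⌉₊ ⌈(q + a) / h⌉₊, g (h * j - a)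
  have : h * A - ∫ x in u..q, g x = (h * A' - ∫ x in u..q, g x) + h * (A - A') := by ring
  rw [this]
  refine (abs_add_le _ _).trans ?_
  rw [abs_mul, abs_of_pos hh]
  nlinarith

theorem pw_riemann (lam : ℝ → ℝ) (hlam : IsPreAverageFn lam) :
    IntervalIntegrable lam volume 0 2 ∧
    ∃ C : ℝ, 0 ≤ C ∧ ∀ h : ℝ, 0 < h → h ≤ 1 → ∀ a : ℝ, 0 ≤ a → ∀ u : ℝ, 0 ≤ u → u ≤ 2 →
      |h * ∑ j ∈ Finset.Ico ⌈(u + a) / h⌉₊ ⌈(2 + a) / h⌉₊, lam (h * j - a) - ∫ x in u..2, lam x|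
        ≤ C * h := by
  obtain ⟨N, t, K, hN, t0, tN, ht, hl⟩ := hlam.piecewise_lipschitz
  have ht0 : ∀ k ≤ N, 0 ≤ t k := by
    intro k
    induction k with
    | zero => intro _; rw [t0]
    | succ k ih => intro hk; linarith [ih (by omega), ht k (by omega)]
  have key : ∀ d k, k + d = N → t k ≤ 2 ∧ IntervalIntegrable lam volume (t k) 2 ∧
    ∃ C : ℝ, 0 ≤ C ∧ ∀ h : ℝ, 0 < h → h ≤ 1 → ∀ a : ℝ, 0 ≤ a → ∀ u : ℝ, t k ≤ u → u ≤ 2 →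
      |h * ∑ j ∈ Finset.Ico ⌈(u + a) / h⌉₊ ⌈(2 + a) / h⌉₊, lam (h * j - a) - ∫ x in u..2, lam x|
        ≤ C * h := by
    intro d
    induction d with
    | zero =>
      intro k hk
      have : k = N := by omega
      subst this
      rw [tN]
      refine ⟨le_rfl, by simp, 0, le_rfl, ?_⟩
      intro h hh h1 a ha u hu hu2
      have : u = 2 := le_antisymm hu2 hu
      subst this
      simp
    | succ d ih =>
      intro k hk
      obtain ⟨i1, i2, C, hC, H⟩ := ih (k+1) (by omega)
      have hkN : k < N := by omega
      obtain ⟨j1, C', hC', H'⟩ := piece_riemann lam K (t k) (t (k+1)) (ht0 k hkN.le) (ht k hkN) i1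
        (hl k hkN)
      refine ⟨(ht k hkN).le.trans i1, j1.trans i2, C + C', by positivity, ?_⟩
      intro h hh h1 a ha u hu hu2
      by_cases huk : t (k+1) ≤ u
      · refine (H h hh h1 a ha u huk hu2).trans ?_
        gcongr; linarith
      · push Not at huk
        have e1 := H h hh h1 a ha (t (k+1)) le_rfl i1
        have e2 := H' h hh h1 a ha u hu huk.le
        have e3 : ∫ x in u..2, lam x = (∫ x in u..t (k+1), lam x) + ∫ x in t (k+1)..2, lam x := by
          rw [intervalIntegral.integral_add_adjacent_intervals _ i2]
          apply j1.mono_set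
          rw [Set.uIcc_of_le huk.le, Set.uIcc_of_le (ht k hkN).le]
          exact Set.Icc_subset_Icc hu le_rfl
        have e4 := Finset.sum_Ico_consecutive (fun j : ℕ => lam (h * j - a))
          (m := ⌈(u + a) / h⌉₊) (n := ⌈(t (k+1) + a) / h⌉₊) (k := ⌈(2 + a) / h⌉₊)
          (Nat.ceil_mono (by gcongr)) (Nat.ceil_mono (by gcongr))
        rw [e3, ← e4]
        rw [abs_le] at *
        constructor <;> nlinarith [e1.1, e1.2, e2.1, e2.2]
  obtain ⟨_, h2, h3⟩ := key N 0 (by omega)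
  rw [t0] at h2 h3
  exact ⟨h2, h3⟩

theorem dbl_integral {α : Type*} [MeasurableSpace α] (μ : Measure α) (S T : Finset ℕ) (c d : ℕ → ℝ)
    (X : ℕ → α → ℝ) (hi : ∀ j ∈ S, ∀ l ∈ T, Integrable (fun x => X j x * X l x) μ) :
    ∫ x, (∑ j ∈ S, c j * X j x) * (∑ l ∈ T, d l * X l x) ∂μ
      = ∑ j ∈ S, ∑ l ∈ T, c j * d l * ∫ x, X j x * X l x ∂μ := by
  have : ∀ x, (∑ j ∈ S, c j * X j x) * (∑ l ∈ T, d l * X l x)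
      = ∑ j ∈ S, ∑ l ∈ T, c j * d l * (X j x * X l x) := by
    intro x
    rw [Finset.sum_mul_sum]
    refine Finset.sum_congr rfl fun j _ => Finset.sum_congr rfl fun l _ => by ring
  simp_rw [this]
  rw [integral_finsetSum]
  · refine Finset.sum_congr rfl fun j hj => ?_
    rw [integral_finsetSum]
    · refine Finset.sum_congr rfl fun l hl => ?_
      rw [integral_const_mul]
    · intro l hl
      exact (hi j hj l hl).const_mul _
  · intro j hj
    exact integrable_finsetSum _ fun l hl => (hi j hj l hl).const_mul _

/-- Tail step function of the Riemann sums. -/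
noncomputable def stepF (lam : ℝ → ℝ) (n m i : ℕ) (s : ℝ) : ℝ :=
  ((m : ℝ) / n) * ∑ j ∈ blockIdx n m i,
    lam ((m : ℝ) * j / n - ((i : ℝ) - 2)) * (if s ≤ (m : ℝ) * j / n then 1 else 0)

theorem ite_mul_ite_eq (x y s : ℝ) : (if s ≤ x then (1:ℝ) else 0) * (if s ≤ y then 1 else 0)
    = (Set.Iic (min x y)).indicator (fun _ => (1:ℝ)) s := by
  by_cases h1 : s ≤ x <;> by_cases h2 : s ≤ y <;> simp [Set.indicator, h1, h2]

theorem model_integrable {Ω : Type*} [MeasureSpace Ω] [IsProbabilityMeasure (ℙ : Measure Ω)]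
    (n : ℕ) (W η : ℕ → Ω → ℝ) (hm : IsSimplifiedModel n W η) (j l : ℕ) (hj : j ≤ n) (hl : l ≤ n) :
    Integrable (fun ω => W j ω * W l ω) ℙ := by
  have key : ∀ j ≤ n, MemLp (W j) 2 (ℙ : Measure Ω) := by
    intro j hj
    obtain ⟨v, hv⟩ := hm.2.2.1 (Pi.single j 1) 0
    have : (fun ω => ∑ k ∈ Finset.range (n + 1), ((Pi.single j 1 : ℕ → ℝ) k * W k ω
        + (0 : ℕ → ℝ) k * η k ω)) = W j := by
      funext ω
      rw [Finset.sum_eq_single j]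
      · simp
      · intro b _ hb; simp [hb]
      · intro h; exact absurd (Finset.mem_range.2 (by omega)) h
    rw [this] at hv
    have h2 := memLp_id_gaussianReal' (μ := 0) (v := v) 2 (by simp)
    rw [← hv] at h2
    exact (memLp_map_measure_iff (by fun_prop) (hm.1 j).aemeasurable).1 h2
  exact (key j hj).integrable_mul (key l hl)

theorem cov_eq {Ω : Type*} [MeasureSpace Ω] [IsProbabilityMeasure (ℙ : Measure Ω)] (σ : ℝ)
    (lam : ℝ → ℝ) (n m i : ℕ) (W η : ℕ → Ω → ℝ) (hm : IsSimplifiedModel n W η)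
    (hn : 0 < n) (hm0 : 0 < m) :
    ∫ ω, preAvg lam n m (fun j ω => σ * W j ω) i ω * preAvg lam n m (fun j ω => σ * W j ω) (i+1) ω
      = σ ^ 2 / m * ∫ s in (0:ℝ)..i, stepF lam n m i s * stepF lam n m (i+1) s := by
  have hn' : (0:ℝ) < n := by exact_mod_cast hn
  have hm' : (0:ℝ) < m := by exact_mod_cast hm0
  have hle : ∀ k, ∀ j ∈ blockIdx n m k, j ≤ n := by
    intro k j hj
    simp only [blockIdx, Finset.mem_filter, Finset.mem_range] at hj
    omega
  have e1 : ∀ k ω, preAvg lam n m (fun j ω => σ * W j ω) k ω = ∑ j ∈ blockIdx n m k,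
      ((m:ℝ) / n * lam ((m : ℝ) * j / n - ((k : ℝ) - 2)) * σ) * W j ω := by
    intro k ω
    rw [preAvg, Finset.mul_sum]
    exact Finset.sum_congr rfl fun j _ => by ring
  have e2 : ∀ k s, stepF lam n m k s = ∑ j ∈ blockIdx n m k,
      ((m:ℝ) / n * lam ((m : ℝ) * j / n - ((k : ℝ) - 2))) *
        (fun (j : ℕ) (s : ℝ) => if s ≤ (m : ℝ) * j / n then (1:ℝ) else 0) j s := by
    intro k ω
    rw [stepF, Finset.mul_sum]
    exact Finset.sum_congr rfl fun j _ => by ring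
  simp_rw [e1, e2]
  rw [dbl_integral _ _ _ (fun j => (m:ℝ) / n * lam ((m : ℝ) * j / n - ((i : ℝ) - 2)) * σ)
    (fun j => (m:ℝ) / n * lam ((m : ℝ) * j / n - (((i+1 : ℕ) : ℝ) - 2)) * σ) W
    (fun j hj l hl => model_integrable n W η hm j l (hle _ _ hj) (hle _ _ hl))]
  rw [intervalIntegral.integral_of_le (by positivity)]
  rw [dbl_integral _ _ _ (fun j => (m:ℝ) / n * lam ((m : ℝ) * j / n - ((i : ℝ) - 2)))
    (fun j => (m:ℝ) / n * lam ((m : ℝ) * j / n - (((i+1 : ℕ) : ℝ) - 2)))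
    (fun (j : ℕ) (s : ℝ) => if s ≤ (m : ℝ) * j / n then (1:ℝ) else 0)]
  · rw [Finset.mul_sum]
    refine Finset.sum_congr rfl fun j hj => ?_
    rw [Finset.mul_sum]
    refine Finset.sum_congr rfl fun l hl => ?_
    rw [hm.2.2.2.1 j l (hle _ _ hj) (hle _ _ hl)]
    have e3 : ∫ s in Set.Ioc (0:ℝ) i, (if s ≤ (m : ℝ) * j / n then (1:ℝ) else 0)
        * (if s ≤ (m : ℝ) * l / n then (1:ℝ) else 0) = m * (min (j:ℝ) l / n) := by
      simp_rw [ite_mul_ite_eq]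
      rw [integral_indicator measurableSet_Iic, setIntegral_const, measureReal_restrict_apply
        measurableSet_Iic]
      have hji : (m : ℝ) * j / n ≤ i := by
        simp only [blockIdx, Finset.mem_filter] at hj
        have := hj.2.2
        rw [div_le_div_iff₀ hn' hm'] at this
        rw [div_le_iff₀ hn']; linarith
      have : Set.Iic (min ((m : ℝ) * j / n) ((m : ℝ) * l / n)) ∩ Set.Ioc (0:ℝ) i
          = Set.Ioc 0 (min ((m : ℝ) * j / n) ((m : ℝ) * l / n)) := by
        ext s
        simp only [Set.mem_inter_iff, Set.mem_Iic, Set.mem_Ioc, le_min_iff]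
        constructor
        · rintro ⟨⟨h1, h2⟩, h3, h4⟩; exact ⟨h3, h1, h2⟩
        · rintro ⟨h3, h1, h2⟩; exact ⟨⟨h1, h2⟩, h3, h1.trans hji⟩
      rw [this, Real.volume_real_Ioc_of_le (by positivity)]
      rw [← min_div_div_right hn'.le, mul_min_of_nonneg _ _ hm'.le]
      simp [mul_div_assoc]
    simp only [e3]
    field_simp
  · intro j _ l _
    simp_rw [ite_mul_ite_eq]
    exact (integrable_const (1:ℝ)).indicator measurableSet_Iic

theorem stepF_est (lam : ℝ → ℝ) (hlam : IsPreAverageFn lam) :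
    ∃ C : ℝ, 0 ≤ C ∧ ∀ n m i : ℕ, 0 < n → 0 < m → m ≤ n → 2 ≤ i → i ≤ m → ∀ s : ℝ, s ≤ i →
      |stepF lam n m i s - ∫ x in (max (s - ((i:ℝ) - 2)) 0)..2, lam x| ≤ C * ((m:ℝ) / n) := by
  obtain ⟨-, C, hC, H⟩ := pw_riemann lam hlam
  refine ⟨C + |lam 2|, by positivity, ?_⟩
  intro n m i hn hm hmn hi him s hs
  have hn' : (0:ℝ) < n := by exact_mod_cast hn
  have hm' : (0:ℝ) < m := by exact_mod_cast hm
  have hi' : (2:ℝ) ≤ i := by exact_mod_cast hi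
  have him' : (i:ℝ) ≤ m := by exact_mod_cast him
  have hh : (0:ℝ) < (m:ℝ) / n := by positivity
  have h1 : (m:ℝ) / n ≤ 1 := by rw [div_le_one hn']; exact_mod_cast hmn
  have e0 : ∀ j : ℕ, (m:ℝ) * j / n = (m:ℝ) / n * j := fun j => by ring
  have eb : ∀ j : ℕ, j ∈ blockIdx n m i ↔ (i:ℝ) - 2 ≤ (m:ℝ) / n * j ∧ (m:ℝ) / n * j ≤ i := by
    intro j
    have q1 : ((i : ℝ) - 2) / m ≤ (j : ℝ) / n ↔ (i:ℝ) - 2 ≤ (m:ℝ) / n * j := by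
      rw [div_le_iff₀ hm']
      have : (j:ℝ) / n * m = (m:ℝ) / n * j := by ring
      rw [this]
    have q2 : (j : ℝ) / n ≤ (i : ℝ) / m ↔ (m:ℝ) / n * j ≤ i := by
      rw [le_div_iff₀ hm']
      have : (j:ℝ) / n * m = (m:ℝ) / n * j := by ring
      rw [this]
    simp only [blockIdx, Finset.mem_filter, Finset.mem_range, q1, q2]
    refine ⟨fun h => h.2, fun h => ⟨?_, h⟩⟩
    have : (m:ℝ) / n * j ≤ m := h.2.trans him'
    rw [div_mul_eq_mul_div, div_le_iff₀ hn'] at this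
    have : (j:ℝ) ≤ n := le_of_mul_le_mul_left this hm'
    have : j ≤ n := by exact_mod_cast this
    omega
  set h : ℝ := (m:ℝ) / n with hhd
  set a : ℝ := (i:ℝ) - 2 with had
  have ha : 0 ≤ a := by linarith
  set u : ℝ := max (s - a) 0 with hu
  have hu0 : 0 ≤ u := le_max_right _ _
  have hu2 : u ≤ 2 := max_le (by linarith) (by norm_num)
  have hH := H h hh h1 a ha u hu0 hu2
  set k0 := ⌈(u + a) / h⌉₊
  set k1 := ⌈(2 + a) / h⌉₊ with hk1
  set S := (blockIdx n m i).filter (fun j : ℕ => s ≤ h * j) with hS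
  have mS : ∀ j : ℕ, j ∈ S ↔ u + a ≤ h * j ∧ h * j ≤ 2 + a := by
    intro j
    rw [hS, Finset.mem_filter, eb]
    have : u + a = max s a := by rw [hu, max_add]; simp
    rw [this, max_le_iff]
    have : 2 + a = i := by rw [had]; ring
    rw [this]; tauto
  have hF : stepF lam n m i s = h * ∑ j ∈ S, lam (h * j - a) := by
    rw [stepF, hS, Finset.sum_filter]
    congr 1
    refine Finset.sum_congr rfl fun j _ => ?_
    rw [e0, ← had]; simp
  have hsub : Finset.Ico k0 k1 ⊆ S := by
    intro j hj
    rw [Finset.mem_Ico, Nat.ceil_le, Nat.lt_ceil, div_le_iff₀ hh, lt_div_iff₀ hh] at hj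
    rw [mS]; constructor <;> nlinarith [hj.1, hj.2]
  have hrest : ∀ j ∈ S \ Finset.Ico k0 k1, j = k1 ∧ h * j = 2 + a := by
    intro j hj
    rw [Finset.mem_sdiff, mS, Finset.mem_Ico, Nat.ceil_le, div_le_iff₀ hh] at hj
    obtain ⟨⟨q1, q2⟩, q3⟩ := hj
    have q4 : k1 ≤ j := by
      by_contra hc
      exact q3 ⟨by linarith, by omega⟩
    have q5 : (2 + a) / h ≤ j := Nat.ceil_le.1 q4
    have q6 : (j:ℝ) ≤ (2 + a) / h := by rw [le_div_iff₀ hh]; linarith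
    have q7 := le_antisymm q6 q5
    refine ⟨?_, ?_⟩
    · rw [hk1, ← q7, Nat.ceil_natCast]
    · rw [q7]; field_simp
  have hsd : |∑ j ∈ S \ Finset.Ico k0 k1, lam (h * j - a)| ≤ |lam 2| := by
    rcases (S \ Finset.Ico k0 k1).eq_empty_or_nonempty with he | ⟨j, hj⟩
    · rw [he]; simp
    · have : S \ Finset.Ico k0 k1 = {k1} := by
        rw [Finset.eq_singleton_iff_unique_mem]
        exact ⟨(hrest j hj).1 ▸ hj, fun x hx => (hrest x hx).1⟩
      rw [this, Finset.sum_singleton, ← (hrest j hj).1, (hrest j hj).2]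
      simp
  rw [hF, ← Finset.sum_sdiff hsub]
  set A := ∑ j ∈ S \ Finset.Ico k0 k1, lam (h * j - a)
  set A' := ∑ j ∈ Finset.Ico k0 k1, lam (h * j - a)
  have : h * (A + A') - ∫ x in u..2, lam x = (h * A' - ∫ x in u..2, lam x) + h * A := by ring
  rw [this]
  refine (abs_add_le _ _).trans ?_
  rw [abs_mul, abs_of_pos hh]
  nlinarith

theorem stepF_intervalIntegrable (lam : ℝ → ℝ) (n m i : ℕ) (p q : ℝ) :
    IntervalIntegrable (fun s => stepF lam n m i s * stepF lam n m (i+1) s) volume p q := by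
  have hb : ∀ k, ∃ B, ∀ s, ‖stepF lam n m k s‖ ≤ B := by
    intro k
    refine ⟨|(m:ℝ)/n| * ∑ j ∈ blockIdx n m k, |lam ((m : ℝ) * j / n - ((k : ℝ) - 2))|, fun s => ?_⟩
    rw [stepF, Real.norm_eq_abs, abs_mul]
    gcongr
    refine (Finset.abs_sum_le_sum_abs _ _).trans (Finset.sum_le_sum fun j _ => ?_)
    split_ifs <;> simp
  have hmeas : ∀ k, Measurable (stepF lam n m k) := by
    intro k
    unfold stepF
    refine Measurable.const_mul (Finset.measurable_fun_sum _ fun j _ => ?_) _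
    exact (Measurable.ite measurableSet_Iic measurable_const measurable_const).const_mul _
  obtain ⟨B, hB⟩ := hb i
  obtain ⟨B', hB'⟩ := hb (i+1)
  refine (intervalIntegrable_const (c := B * B')).mono_fun'
    ((hmeas i).mul (hmeas (i+1))).aestronglyMeasurable ?_
  refine Filter.Eventually.of_forall fun s => ?_
  simp only [norm_mul]
  exact mul_le_mul (hB s) (hB' s) (norm_nonneg _) ((norm_nonneg _).trans (hB s))

theorem tail_eq (lam : ℝ → ℝ) (hlam : IsPreAverageFn lam) (v : ℝ) (h0 : 0 ≤ v) (h1 : v ≤ 1) :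
    ∫ x in (2 - v)..2, lam x = bigLam lam v := by
  have e := intervalIntegral.integral_comp_sub_left (a := 0) (b := v) lam 2
  rw [sub_zero] at e
  rw [← e, bigLam, ← intervalIntegral.integral_neg]
  refine intervalIntegral.integral_congr fun x hx => ?_
  rw [Set.uIcc_of_le h0] at hx
  have := hlam.antisymm x ⟨hx.1, hx.2.trans h1⟩
  linarith

theorem total_zero (lam : ℝ → ℝ) (hlam : IsPreAverageFn lam) :
    ∫ x in (0:ℝ)..2, lam x = 0 := by
  obtain ⟨hi, -⟩ := pw_riemann lam hlam
  have a1 : IntervalIntegrable lam volume 0 1 := hi.mono_set (by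
    rw [Set.uIcc_of_le (by norm_num), Set.uIcc_of_le (by norm_num)]
    exact Set.Icc_subset_Icc le_rfl (by norm_num))
  have a2 : IntervalIntegrable lam volume 1 2 := hi.mono_set (by
    rw [Set.uIcc_of_le (by norm_num), Set.uIcc_of_le (by norm_num)]
    exact Set.Icc_subset_Icc (by norm_num) le_rfl)
  have := tail_eq lam hlam 1 (by norm_num) le_rfl
  rw [← intervalIntegral.integral_add_adjacent_intervals a1 a2]
  rw [show (2:ℝ) - 1 = 1 by norm_num, bigLam] at this
  rw [this]; ring

theorem tail_eq' (lam : ℝ → ℝ) (hlam : IsPreAverageFn lam) (v : ℝ) (h0 : 0 ≤ v) (h1 : v ≤ 2) :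
    ∫ x in v..2, lam x = bigLam lam v := by
  obtain ⟨hi, -⟩ := pw_riemann lam hlam
  have a1 : IntervalIntegrable lam volume 0 v := hi.mono_set (by
    rw [Set.uIcc_of_le h0, Set.uIcc_of_le (by norm_num)]
    exact Set.Icc_subset_Icc le_rfl h1)
  have a2 : IntervalIntegrable lam volume v 2 := hi.mono_set (by
    rw [Set.uIcc_of_le h1, Set.uIcc_of_le (by norm_num)]
    exact Set.Icc_subset_Icc h0 le_rfl)
  have := intervalIntegral.integral_add_adjacent_intervals a1 a2
  rw [total_zero lam hlam] at this
  rw [bigLam]; linarith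

theorem step_integral_est (lam : ℝ → ℝ) (hlam : IsPreAverageFn lam) :
    ∃ C : ℝ, 0 ≤ C ∧ ∃ D : ℝ, 0 ≤ D ∧ ∀ n m i : ℕ, 0 < n → 0 < m → m ≤ n → 2 ≤ i → i + 1 ≤ m →
      |(∫ s in (0:ℝ)..i, stepF lam n m i s * stepF lam n m (i+1) s)
        - ∫ u in (0:ℝ)..1, bigLam lam u * bigLam lam (1 - u)|
        ≤ m * (C * ((m:ℝ) / n) ^ 2) + D * ((m:ℝ) / n) := by
  obtain ⟨hint, -⟩ := pw_riemann lam hlam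
  obtain ⟨C, hC, H⟩ := stepF_est lam hlam
  set V : ℝ → ℝ := fun u => ∫ x in u..2, lam x with hV
  have hVc : ContinuousOn V (Set.Icc 0 2) := by
    have := intervalIntegral.continuousOn_primitive_interval_left (f := lam) (μ := volume)
      (a := 0) (b := 2) ((intervalIntegrable_iff' (by simp)).1 hint)
    rwa [Set.uIcc_of_le (by norm_num)] at this
  obtain ⟨B, hB⟩ := isCompact_Icc.exists_bound_of_continuousOn hVc
  have hB0 : 0 ≤ B := (norm_nonneg _).trans (hB 0 ⟨le_rfl, by norm_num⟩)
  refine ⟨C ^ 2, by positivity, (B + C) * C + ((B + C) * C + B * C), by positivity, ?_⟩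
  intro n m i hn hm hmn hi him
  have hn' : (0:ℝ) < n := by exact_mod_cast hn
  have hm' : (0:ℝ) < m := by exact_mod_cast hm
  have hi' : (2:ℝ) ≤ i := by exact_mod_cast hi
  have him' : (i:ℝ) ≤ m := by exact_mod_cast (by omega : i ≤ m)
  have hF := H n m i hn hm hmn hi (by omega)
  have hF' := H n m (i+1) hn hm hmn (by omega) him
  push_cast at hF'
  have hh : (0:ℝ) < (m:ℝ) / n := by positivity
  have h1 : (m:ℝ) / n ≤ 1 := by rw [div_le_one hn']; exact_mod_cast hmn
  set h : ℝ := (m:ℝ) / n with hhd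
  set F := stepF lam n m i
  set F' := stepF lam n m (i+1)
  set a : ℝ := (i:ℝ) - 2 with had
  have ha : 0 ≤ a := by linarith
  have ea : (i:ℝ) + 1 - 2 = a + 1 := by rw [had]; ring
  rw [ea] at hF'
  have hV0 : V 0 = 0 := total_zero lam hlam
  have hCh : C * h ≤ C := by nlinarith
  have hI := stepF_intervalIntegrable lam n m i
  have hFs : ∀ s, s ≤ a → |F s| ≤ C * h := by
    intro s hs
    have := hF s (by linarith)
    rw [max_eq_right (by linarith)] at this
    change |F s - V 0| ≤ _ at this
    rwa [hV0, sub_zero] at this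
  have hFs' : ∀ s, s ≤ a + 1 → |F' s| ≤ C * h := by
    intro s hs
    have := hF' s (by linarith)
    rw [max_eq_right (by linarith)] at this
    change |F' s - V 0| ≤ _ at this
    rwa [hV0, sub_zero] at this
  have hFV : ∀ s, a ≤ s → s ≤ a + 2 → |F s - V (s - a)| ≤ C * h := by
    intro s hs hs2
    have := hF s (by linarith)
    rwa [max_eq_left (by linarith)] at this
  have hFV' : ∀ s, a + 1 ≤ s → s ≤ a + 2 → |F' s - V (s - (a + 1))| ≤ C * h := by
    intro s hs hs2
    have := hF' s (by linarith)
    rwa [max_eq_left (by linarith)] at this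
  have hVb : ∀ x, 0 ≤ x → x ≤ 2 → |V x| ≤ B := fun x h0 h2 => hB x ⟨h0, h2⟩
  have tri : ∀ x y z : ℝ, |x - y| ≤ C * h → |y| ≤ B → |x| ≤ B + C := by
    intro x y z hxy hy
    have := abs_sub_abs_le_abs_sub x y
    linarith
  have i1 : |∫ s in (0:ℝ)..a, F s * F' s| ≤ m * (C ^ 2 * h ^ 2) := by
    have := intervalIntegral.norm_integral_le_of_norm_le_const (a := 0) (b := a)
      (f := fun s => F s * F' s) (C := (C * h) * (C * h)) ?_
    · refine this.trans ?_
      rw [sub_zero, abs_of_nonneg ha]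
      have : a ≤ m := by linarith
      calc C * h * (C * h) * a ≤ C * h * (C * h) * m := by gcongr
        _ = _ := by ring
    · intro s hs
      rw [Set.uIoc_of_le ha] at hs
      rw [norm_mul]
      exact mul_le_mul (hFs s hs.2) (hFs' s (by linarith [hs.2])) (norm_nonneg _) (by positivity)
  have i2 : |∫ s in a..(a+1), F s * F' s| ≤ (B + C) * C * h := by
    have := intervalIntegral.norm_integral_le_of_norm_le_const (a := a) (b := a + 1)
      (f := fun s => F s * F' s) (C := (B + C) * (C * h)) ?_
    · refine this.trans (le_of_eq ?_)
      simp; ring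
    · intro s hs
      rw [Set.uIoc_of_le (by linarith)] at hs
      rw [norm_mul]
      refine mul_le_mul ?_ (hFs' s hs.2) (norm_nonneg _) (by positivity)
      exact tri _ _ 0 (hFV s hs.1.le (by linarith [hs.2])) (hVb _ (by linarith [hs.1])
        (by linarith [hs.2]))
  have hVI : IntervalIntegrable (fun s => V (s - a) * V (s - (a + 1))) volume (a+1) (a+2) := by
    apply ContinuousOn.intervalIntegrable
    rw [Set.uIcc_of_le (by linarith)]
    refine ContinuousOn.mul ?_ ?_
    · refine hVc.comp (by fun_prop) fun s hs => ?_
      constructor <;> linarith [hs.1, hs.2]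
    · refine hVc.comp (by fun_prop) fun s hs => ?_
      constructor <;> linarith [hs.1, hs.2]
  have i3 : |(∫ s in (a+1)..(a+2), F s * F' s) - ∫ s in (a+1)..(a+2), V (s - a) * V (s - (a + 1))|
      ≤ ((B + C) * C + B * C) * h := by
    rw [← intervalIntegral.integral_sub (hI _ _) hVI]
    have := intervalIntegral.norm_integral_le_of_norm_le_const (a := a + 1) (b := a + 2)
      (f := fun s => F s * F' s - V (s - a) * V (s - (a + 1)))
      (C := (C * h) * (B + C) + B * (C * h)) ?_
    · refine this.trans (le_of_eq ?_)
      rw [show a + 2 - (a + 1) = 1 by ring]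
      simp; ring
    · intro s hs
      rw [Set.uIoc_of_le (by linarith)] at hs
      obtain ⟨hs1, hs2⟩ := hs
      have : F s * F' s - V (s - a) * V (s - (a + 1))
        = (F s - V (s - a)) * F' s + V (s - a) * (F' s - V (s - (a + 1))) := by ring
      rw [this]
      refine (norm_add_le _ _).trans ?_
      rw [norm_mul, norm_mul]
      refine add_le_add ?_ ?_
      · exact mul_le_mul (hFV s (by linarith) hs2) (tri _ _ 0 (hFV' s hs1.le hs2)
          (hVb _ (by linarith) (by linarith))) (norm_nonneg _) (by positivity)
      · exact mul_le_mul (hVb _ (by linarith) (by linarith)) (hFV' s hs1.le hs2)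
          (norm_nonneg _) hB0
  have i4 : ∫ s in (a+1)..(a+2), V (s - a) * V (s - (a + 1))
      = ∫ u in (0:ℝ)..1, bigLam lam u * bigLam lam (1 - u) := by
    have := intervalIntegral.integral_comp_sub_left (a := 0) (b := 1)
      (fun s => V (s - a) * V (s - (a + 1))) (a + 2)
    rw [show a + 2 - 1 = a + 1 by ring, sub_zero] at this
    rw [← this]
    refine intervalIntegral.integral_congr fun u hu => ?_
    rw [Set.uIcc_of_le (by norm_num)] at hu
    have q1 : a + 2 - u - a = 2 - u := by ring
    have q2 : a + 2 - u - (a + 1) = 1 - u := by ring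
    simp only [q1, q2]
    rw [← tail_eq lam hlam u hu.1 hu.2,
      ← tail_eq' lam hlam (1 - u) (by linarith [hu.2]) (by linarith [hu.1])]
  have i5 : ∫ s in (0:ℝ)..i, F s * F' s = (∫ s in (0:ℝ)..a, F s * F' s)
      + (∫ s in a..(a+1), F s * F' s) + ∫ s in (a+1)..(a+2), F s * F' s := by
    rw [intervalIntegral.integral_add_adjacent_intervals (hI _ _) (hI _ _),
      intervalIntegral.integral_add_adjacent_intervals (hI _ _) (hI _ _)]
    congr 1; rw [had]; ring
  rw [i5, ← i4]
  rw [abs_le] at *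
  constructor <;> linarith [i1.1, i1.2, i2.1, i2.2, i3.1, i3.2]

theorem mOf_bound (c : ℝ) (hc : 0 < c) (n : ℕ) (hn : 4 * c ^ 2 ≤ n) (hn0 : 0 < n) :
    mOf c n ≤ n ∧ ((mOf c n : ℝ) / n) ^ 2 ≤ 4 * c ^ 2 / n := by
  refine ⟨Nat.div_le_self _ _, ?_⟩
  have hn' : (0:ℝ) < n := by exact_mod_cast hn0
  have hs : 2 * c ≤ √(n:ℝ) := by
    apply Real.le_sqrt_of_sq_le; linarith
  have hk : √(n:ℝ) / c / 2 ≤ (⌊√(n:ℝ) / c⌋₊ : ℝ) := by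
    have e1 := Nat.lt_floor_add_one (√(n:ℝ) / c)
    have e2 : 2 ≤ √(n:ℝ) / c := by rw [le_div_iff₀ hc]; exact hs
    linarith
  have hsp : 0 < √(n:ℝ) := by positivity
  have hm : (mOf c n : ℝ) ≤ 2 * c * √(n:ℝ) := by
    calc (mOf c n : ℝ) ≤ n / (⌊√(n:ℝ) / c⌋₊ : ℝ) := Nat.cast_div_le
      _ ≤ n / (√(n:ℝ) / c / 2) := by gcongr
      _ = (√(n:ℝ) * √(n:ℝ)) / (√(n:ℝ) / c / 2) := by rw [Real.mul_self_sqrt hn'.le]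
      _ = _ := by field_simp
  rw [div_pow, div_le_div_iff₀ (by positivity) hn']
  have : (mOf c n : ℝ) ^ 2 ≤ 4 * c ^ 2 * n := by
    calc (mOf c n : ℝ) ^ 2 ≤ (2 * c * √(n:ℝ)) ^ 2 := by gcongr
      _ = 4 * c ^ 2 * (√(n:ℝ)) ^ 2 := by ring
      _ = _ := by rw [Real.sq_sqrt hn'.le]
  nlinarith


theorem preAveragedBM_adjacent_covariance (σ τ c : ℝ) (hσ : 0 < σ) (hτ : 0 < τ) (hc : 0 < c)
    (lam : ℝ → ℝ) (hlam : IsPreAverageFn lam)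
    (Ω : ℕ → Type*) [∀ n, MeasureSpace (Ω n)] [∀ n, IsProbabilityMeasure (ℙ : Measure (Ω n))]
    (W η : (n : ℕ) → ℕ → Ω n → ℝ)
    (hmodel : ∀ n, IsSimplifiedModel n (W n) (η n)) :
    ∃ C > 0, ∃ N : ℕ, ∀ n ≥ N, ∀ i : ℕ, 2 ≤ i → i + 1 ≤ mOf c n →
      |(∫ ω, preAvg lam n (mOf c n) (fun j ω => σ * W n j ω) i ω *
             preAvg lam n (mOf c n) (fun j ω => σ * W n j ω) (i + 1) ω)
          - (σ ^ 2 / (mOf c n : ℝ)) *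
              ∫ u in (0:ℝ)..1, bigLam lam u * bigLam lam (1 - u)| ≤ C / n := by
  obtain ⟨C, hC, D, hD, H⟩ := step_integral_est lam hlam
  refine ⟨σ ^ 2 * (C * (4 * c ^ 2) + D) + 1, by positivity, ⌈4 * c ^ 2⌉₊ + 1, ?_⟩
  intro n hn i hi him
  have hn0 : 0 < n := by omega
  have hn4 : 4 * c ^ 2 ≤ n := (Nat.le_ceil _).trans (by exact_mod_cast (by omega : _ ≤ n))
  obtain ⟨hmn, hm2⟩ := mOf_bound c hc n hn4 hn0
  set m := mOf c n
  have hm0 : 0 < m := by omega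
  have hn' : (0:ℝ) < n := by exact_mod_cast hn0
  have hm' : (0:ℝ) < m := by exact_mod_cast hm0
  rw [cov_eq σ lam n m i (W n) (η n) (hmodel n) hn0 hm0, ← mul_sub, abs_mul,
    abs_of_pos (by positivity)]
  calc _ ≤ σ ^ 2 / m * (m * (C * ((m:ℝ) / n) ^ 2) + D * ((m:ℝ) / n)) := by
        gcongr
        exact H n m i hn0 hm0 hmn hi him
    _ = σ ^ 2 * (C * ((m:ℝ) / n) ^ 2 + D / n) := by field_simp
    _ ≤ σ ^ 2 * (C * (4 * c ^ 2 / n) + D / n) := by gcongr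
    _ = σ ^ 2 * (C * (4 * c ^ 2) + D) / n := by field_simp
    _ ≤ _ := by gcongr; linarith
end

section
/- In the simplified model (Case I of the covariance computation), there are constants C > 0 and N such that for all n ≥ N and all 2 ≤ i, k ≤ m with |i − k| ≥ 2, the pre-averaged observations on non-overlapping blocks satisfy |E[Ȳ_{i,m} Ȳ_{k,m}]| ≤ C/n (note E[Ȳ_{i,m}] = 0, so this is the covariance). -/
open MeasureTheory ProbabilityTheory Real

lemma paf_piece {N : ℕ} {t : ℕ → ℝ} (h0 : t 0 = 0) (hN : t N = 2) {x y : ℝ}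
    (hx : 0 ≤ x) (hxy : x ≤ y) (hy : y ≤ 2) :
    (∃ p ≤ N, x ≤ t p ∧ t p ≤ y) ∨
    ∃ q < N, x ∈ Set.Ioo (t q) (t (q + 1)) ∧ y ∈ Set.Ioo (t q) (t (q + 1)) := by
  classical
  by_cases h : ∃ p ≤ N, x ≤ t p ∧ t p ≤ y
  · exact Or.inl h
  right
  push Not at h
  have hex : ∃ p, y < t p := ⟨N, h N le_rfl (by linarith)⟩
  obtain ⟨p, hp, hmin⟩ : ∃ p, y < t p ∧ ∀ q < p, ¬ y < t q :=
    ⟨Nat.find hex, Nat.find_spec hex, fun q hq => Nat.find_min hex hq⟩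
  have hpN : p ≤ N := by
    by_contra hlt
    exact hmin N (by omega) (h N le_rfl (by linarith))
  cases p with
  | zero => linarith
  | succ q =>
    have h1 := hmin q (by omega)
    have h2 : t q < x := by
      by_contra h3
      exact h1 (h q (by omega) (by linarith))
    exact ⟨q, by omega, ⟨h2, by linarith⟩, ⟨by linarith, hp⟩⟩

lemma paf_bounded {lam : ℝ → ℝ} {N : ℕ} {t : ℕ → ℝ} {K : NNReal}
    (h0 : t 0 = 0) (hN : t N = 2)
    (hL : ∀ i < N, LipschitzOnWith K lam (Set.Ioo (t i) (t (i + 1)))) :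
    ∃ M : ℝ, 0 ≤ M ∧ ∀ x, 0 ≤ x → x ≤ 2 → |lam x| ≤ M := by
  have hA : ∀ q < N, ∃ B : ℝ, 0 ≤ B ∧ ∀ x ∈ Set.Ioo (t q) (t (q + 1)), |lam x| ≤ B := by
    intro q hq
    by_cases hne : ∃ z, z ∈ Set.Ioo (t q) (t (q + 1))
    · obtain ⟨z, hz⟩ := hne
      refine ⟨|lam z| + K * (t (q + 1) - t q), ?_, ?_⟩
      · have : 0 ≤ t (q + 1) - t q := by linarith [hz.1, hz.2]
        positivity
      · intro x hx
        have h1 := (hL q hq).dist_le_mul x hx z hz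
        rw [Real.dist_eq, Real.dist_eq] at h1
        have h2 : |x - z| ≤ t (q + 1) - t q := by
          rw [abs_le]; constructor <;> linarith [hz.1, hz.2, hx.1, hx.2]
        have h3 : (K : ℝ) * |x - z| ≤ K * (t (q + 1) - t q) := by gcongr
        have h4 : |lam x| ≤ |lam x - lam z| + |lam z| := by
          have := abs_add_le (lam x - lam z) (lam z)
          simpa using this
        linarith
    · exact ⟨0, le_rfl, fun x hx => absurd ⟨x, hx⟩ hne⟩
  choose! B hB0 hB using hA
  have hs1 : 0 ≤ ∑ q ∈ Finset.range N, B q :=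
    Finset.sum_nonneg fun q hq => hB0 q (Finset.mem_range.1 hq)
  have hs2 : 0 ≤ ∑ p ∈ Finset.range (N + 1), |lam (t p)| :=
    Finset.sum_nonneg fun q _ => abs_nonneg _
  refine ⟨∑ q ∈ Finset.range N, B q + ∑ p ∈ Finset.range (N + 1), |lam (t p)|,
    by linarith, ?_⟩
  intro x hx hx2
  rcases paf_piece h0 hN hx le_rfl hx2 with ⟨p, hp, h1, h2⟩ | ⟨q, hq, h1, -⟩
  · have : x = t p := le_antisymm h1 h2
    subst this
    have := Finset.single_le_sum (f := fun p => |lam (t p)|) (fun p _ => abs_nonneg _)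
      (Finset.mem_range.2 (Nat.lt_succ_of_le hp))
    linarith
  · have := Finset.single_le_sum (f := B) (fun q hq => hB0 q (Finset.mem_range.1 hq))
      (Finset.mem_range.2 hq)
    linarith [hB q hq x h1]

lemma paf_osc {lam : ℝ → ℝ} {N : ℕ} {t : ℕ → ℝ} {K : NNReal}
    (h0 : t 0 = 0) (hN : t N = 2)
    (hL : ∀ i < N, LipschitzOnWith K lam (Set.Ioo (t i) (t (i + 1)))) {M : ℝ} (hM0 : 0 ≤ M)
    (hM : ∀ x, 0 ≤ x → x ≤ 2 → |lam x| ≤ M) {δ x y : ℝ} (hx : 0 ≤ x) (hx2 : x ≤ 2)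
    (hy : 0 ≤ y) (hy2 : y ≤ 2) (hd : |x - y| ≤ δ) :
    |lam x - lam y| ≤ K * δ +
      ∑ p ∈ Finset.range (N + 1), if |x - t p| ≤ δ then 2 * M else 0 := by
  have hδ : 0 ≤ δ := (abs_nonneg _).trans hd
  have key : (∃ p ≤ N, |x - t p| ≤ δ) ∨
      ∃ q < N, x ∈ Set.Ioo (t q) (t (q + 1)) ∧ y ∈ Set.Ioo (t q) (t (q + 1)) := by
    rw [abs_le] at hd
    rcases le_total x y with h | h
    · rcases paf_piece h0 hN hx h hy2 with ⟨p, hp, h1, h2⟩ | h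
      · exact Or.inl ⟨p, hp, by rw [abs_le]; constructor <;> linarith⟩
      · exact Or.inr h
    · rcases paf_piece h0 hN hy h hx2 with ⟨p, hp, h1, h2⟩ | ⟨q, a, b, c⟩
      · exact Or.inl ⟨p, hp, by rw [abs_le]; constructor <;> linarith⟩
      · exact Or.inr ⟨q, a, c, b⟩
  have hnn : ∀ p ∈ Finset.range (N + 1), (0:ℝ) ≤ if |x - t p| ≤ δ then 2 * M else 0 := by
    intro p _; split_ifs <;> linarith
  rcases key with ⟨p, hp, h⟩ | ⟨q, hq, h1, h2⟩
  · have := Finset.single_le_sum hnn (Finset.mem_range.2 (Nat.lt_succ_of_le hp))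
    rw [if_pos h] at this
    have h3 : |lam x - lam y| ≤ |lam x| + |lam y| := abs_sub _ _
    have : 0 ≤ K * δ := by positivity
    linarith [hM x hx hx2, hM y hy hy2]
  · have h3 := (hL q hq).dist_le_mul x h1 y h2
    rw [Real.dist_eq, Real.dist_eq] at h3
    have : (K:ℝ) * |x - y| ≤ K * δ := by gcongr
    linarith [Finset.sum_nonneg hnn]

lemma paf_count {δ s : ℝ} (hδ : 0 < δ) (S : Finset ℕ) :
    ((S.filter fun j : ℕ => |δ * j - s| ≤ δ).card : ℝ) ≤ 3 := by
  by_cases hne : (S.filter fun j : ℕ => |δ * j - s| ≤ δ).Nonempty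
  · set T := S.filter fun j : ℕ => |δ * j - s| ≤ δ with hT
    have hsub : T ⊆ Finset.Icc (T.min' hne) (T.min' hne + 2) := by
      intro j hj
      have hmin := T.min'_mem hne
      have hle := T.min'_le j hj
      rw [Finset.mem_Icc]
      refine ⟨hle, ?_⟩
      have a1 := (Finset.mem_filter.1 hj).2
      have a2 := (Finset.mem_filter.1 hmin).2
      rw [abs_le] at a1 a2
      have : δ * (j:ℝ) ≤ δ * ((T.min' hne : ℝ) + 2) := by linarith [a1.2, a2.1]
      have := le_of_mul_le_mul_left this hδ
      exact_mod_cast this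
    have := Finset.card_le_card hsub
    rw [Nat.card_Icc] at this
    have h3 : T.card ≤ 3 := by omega
    exact_mod_cast h3
  · rw [Finset.not_nonempty_iff_eq_empty.1 hne]; simp

lemma paf_sum_bound {lam : ℝ → ℝ} {N : ℕ} {t : ℕ → ℝ} {K : NNReal}
    (h0 : t 0 = 0) (hN : t N = 2)
    (hL : ∀ i < N, LipschitzOnWith K lam (Set.Ioo (t i) (t (i + 1)))) {M : ℝ} (hM0 : 0 ≤ M)
    (hM : ∀ x, 0 ≤ x → x ≤ 2 → |lam x| ≤ M)
    (hanti : ∀ x ∈ Set.Icc (0:ℝ) 1, lam x = - lam (2 - x))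
    {δ r : ℝ} (hδ : 0 < δ) (hδ1 : δ ≤ 1) {a b : ℕ}
    (ha : 0 ≤ δ * a - r) (ha' : δ * a - r ≤ δ) (hb : δ * b - r ≤ 2) (hb' : 2 - δ ≤ δ * b - r) :
    |∑ j ∈ Finset.Icc a b, lam (δ * j - r)| ≤ 3 * K + (N + 1) * (6 * M) := by
  have hanti2 : ∀ x, 0 ≤ x → x ≤ 2 → lam x = - lam (2 - x) := by
    intro x hx hx2
    rcases le_total x 1 with h | h
    · exact hanti x ⟨hx, h⟩
    · have := hanti (2 - x) ⟨by linarith, by linarith⟩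
      rw [this]; simp
  have hmem : ∀ j ∈ Finset.Icc a b, 0 ≤ δ * (j:ℝ) - r ∧ δ * (j:ℝ) - r ≤ 2 := by
    intro j hj
    rw [Finset.mem_Icc] at hj
    have h1 : (a:ℝ) ≤ j := by exact_mod_cast hj.1
    have h2 : (j:ℝ) ≤ b := by exact_mod_cast hj.2
    have h3 : δ * (a:ℝ) ≤ δ * j := by gcongr
    have h4 : δ * (j:ℝ) ≤ δ * b := by gcongr
    constructor <;> linarith
  have hab : (a:ℝ) ≤ b := by
    have : δ * (a:ℝ) ≤ δ * b := by linarith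
    exact le_of_mul_le_mul_left this hδ
  have habn : a ≤ b := by exact_mod_cast hab
  -- reflect the sum
  have hrefl : ∑ j ∈ Finset.Icc a b, lam (δ * j - r)
      = - ∑ j ∈ Finset.Icc a b, lam (2 - (δ * (a + b - j) - r)) := by
    rw [← Finset.sum_neg_distrib]
    refine Finset.sum_nbij' (fun j => a + b - j) (fun j => a + b - j) ?_ ?_ ?_ ?_ ?_
    · intro j hj; rw [Finset.mem_Icc] at *; omega
    · intro j hj; rw [Finset.mem_Icc] at *; omega
    · intro j hj; rw [Finset.mem_Icc] at *; omega
    · intro j hj; rw [Finset.mem_Icc] at *; omega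
    · intro j hj
      have := hmem j hj
      rw [hanti2 _ this.1 this.2]
      rw [Finset.mem_Icc] at hj
      have e : ((a + b - j : ℕ) : ℝ) = a + b - j := by
        rw [Nat.cast_sub (by omega)]; push_cast; ring
      rw [e]; congr 3; ring
  have h2 : 2 * |∑ j ∈ Finset.Icc a b, lam (δ * j - r)| ≤
      ∑ j ∈ Finset.Icc a b, |lam (δ * j - r) - lam (2 - (δ * (a + b - j) - r))| := by
    have e : 2 * ∑ j ∈ Finset.Icc a b, lam (δ * j - r) =
      ∑ j ∈ Finset.Icc a b, (lam (δ * j - r) - lam (2 - (δ * (a + b - j) - r))) := by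
      rw [Finset.sum_sub_distrib]; linarith
    calc _ = |2 * ∑ j ∈ Finset.Icc a b, lam (δ * j - r)| := by rw [abs_mul]; norm_num
      _ ≤ _ := by rw [e]; exact Finset.abs_sum_le_sum_abs _ _
  have h3 : ∀ j ∈ Finset.Icc a b, |lam (δ * j - r) - lam (2 - (δ * (a + b - j) - r))| ≤
      K * δ + ∑ p ∈ Finset.range (N + 1), if |δ * j - r - t p| ≤ δ then 2 * M else 0 := by
    intro j hj
    have hj1 := hmem j hj
    rw [Finset.mem_Icc] at hj
    have g1 : (a:ℝ) ≤ j := by exact_mod_cast hj.1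
    have g2 : (j:ℝ) ≤ b := by exact_mod_cast hj.2
    have g3 : δ * (a:ℝ) ≤ δ * j := by gcongr
    have g4 : δ * (j:ℝ) ≤ δ * b := by gcongr
    refine paf_osc h0 hN hL hM0 hM hj1.1 hj1.2 (by linarith) (by linarith) ?_
    rw [abs_le]; constructor <;> linarith
  have h4 := h2.trans (Finset.sum_le_sum h3)
  rw [Finset.sum_add_distrib, Finset.sum_comm] at h4
  have h5 : ∀ p ∈ Finset.range (N + 1),
      (∑ j ∈ Finset.Icc a b, if |δ * j - r - t p| ≤ δ then 2 * M else 0) ≤ 6 * M := by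
    intro p _
    rw [← Finset.sum_filter, Finset.sum_const, nsmul_eq_mul]
    have := paf_count (s := r + t p) hδ (Finset.Icc a b)
    simp only [← sub_sub] at this
    nlinarith
  have h6 := Finset.sum_le_sum h5
  simp only [Finset.sum_const, nsmul_eq_mul, Finset.card_range, Nat.card_Icc] at h4 h6
  have h7 : ((b + 1 - a : ℕ) : ℝ) * (K * δ) ≤ 3 * K := by
    rw [Nat.cast_sub (by omega)]
    push_cast
    have : ((b:ℝ) + 1 - a) * δ ≤ 3 := by nlinarith
    have hK : (0:ℝ) ≤ K := K.2
    nlinarith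
  push_cast at h6
  have := abs_nonneg (∑ j ∈ Finset.Icc a b, lam (δ * j - r))
  linarith

lemma paf_blockIdx {n m i : ℕ} (hn : 0 < n) (hm : 0 < m) (hi : 2 ≤ i) (him : i ≤ m) :
    ∃ a b : ℕ, blockIdx n m i = Finset.Icc a b ∧ a ≤ n ∧
      0 ≤ (m / n : ℝ) * a - ((i:ℝ) - 2) ∧ (m / n : ℝ) * a - ((i:ℝ) - 2) ≤ (m / n : ℝ) ∧
      (m / n : ℝ) * b - ((i:ℝ) - 2) ≤ 2 ∧ 2 - (m / n : ℝ) ≤ (m / n : ℝ) * b - ((i:ℝ) - 2) := by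
  have hn' : (0:ℝ) < n := by exact_mod_cast hn
  have hm' : (0:ℝ) < m := by exact_mod_cast hm
  have hi' : (2:ℝ) ≤ i := by exact_mod_cast hi
  have him' : (i:ℝ) ≤ m := by exact_mod_cast him
  have hδ : 0 < (m / n : ℝ) := by positivity
  set δ : ℝ := m / n with hδd
  have e1 : ∀ j : ℕ, ((i : ℝ) - 2) / m ≤ (j : ℝ) / n ↔ ((i:ℝ) - 2) / δ ≤ j := by
    intro j
    rw [hδd, div_le_div_iff₀ hm' hn', div_le_iff₀ (by positivity), ← mul_div_assoc,
      le_div_iff₀ hn']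
  have e2 : ∀ j : ℕ, (j : ℝ) / n ≤ (i : ℝ) / m ↔ (j:ℝ) ≤ i / δ := by
    intro j
    rw [hδd, div_le_div_iff₀ hn' hm', le_div_iff₀ (by positivity), ← mul_div_assoc,
      div_le_iff₀ hn']
  have hpos : 0 ≤ ((i:ℝ) - 2) / δ := div_nonneg (by linarith) hδ.le
  have hpos2 : 0 ≤ (i:ℝ) / δ := by positivity
  have hle : (i:ℝ) / δ ≤ n := by
    rw [hδd, div_div_eq_mul_div, div_le_iff₀ hm']; nlinarith
  refine ⟨⌈((i:ℝ) - 2) / δ⌉₊, ⌊(i:ℝ) / δ⌋₊, ?_, ?_, ?_, ?_, ?_, ?_⟩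
  · ext j
    simp only [blockIdx, Finset.mem_filter, Finset.mem_range, Finset.mem_Icc, e1, e2,
      Nat.ceil_le, Nat.le_floor_iff hpos2]
    constructor
    · rintro ⟨_, h⟩; exact h
    · intro h
      refine ⟨?_, h⟩
      have : (j:ℝ) ≤ n := h.2.trans hle
      have : j ≤ n := by exact_mod_cast this
      omega
  · rw [Nat.ceil_le]
    refine le_trans ?_ hle
    gcongr; linarith
  · have := Nat.le_ceil (((i:ℝ) - 2) / δ)
    rw [div_le_iff₀ hδ] at this; linarith
  · have := (Nat.ceil_lt_add_one hpos).le
    have := mul_le_mul_of_nonneg_left this hδ.le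
    rw [mul_add, mul_div_cancel₀ _ hδ.ne'] at this; linarith
  · have := Nat.floor_le hpos2
    rw [le_div_iff₀ hδ] at this; linarith
  · have := (Nat.lt_floor_add_one ((i:ℝ) / δ)).le
    rw [div_le_iff₀ hδ] at this; linarith

/-- covariance of two observations. -/
lemma paf_cov {Ω : Type*} [MeasureSpace Ω]
    {n : ℕ} {W η : ℕ → Ω → ℝ} (h : IsSimplifiedModel n W η) (σ τ : ℝ) {j l : ℕ}
    (hj : j ≤ n) (hl : l ≤ n) :
    Integrable (fun ω => obs σ τ W η j ω * obs σ τ W η l ω) ℙ ∧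
    ∫ ω, obs σ τ W η j ω * obs σ τ W η l ω =
      σ ^ 2 * ((min j l : ℝ) / n) + τ ^ 2 * (if j = l then 1 else 0) := by
  obtain ⟨hW, hη, hG, hWW, hηη, hWη⟩ := h
  have key : ∀ X : Ω → ℝ, Measurable X → (∃ v : NNReal, Measure.map X ℙ = gaussianReal 0 v) →
      MemLp X 2 ℙ := by
    rintro X hX ⟨v, hv⟩
    have h1 : MemLp (id : ℝ → ℝ) 2 (Measure.map X ℙ) := by
      rw [hv]; exact memLp_id_gaussianReal 2
    exact (memLp_map_measure_iff (by fun_prop) hX.aemeasurable).1 h1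
  have hWL : ∀ j ≤ n, MemLp (W j) 2 ℙ := by
    intro j hj
    refine key _ (hW j) ?_
    obtain ⟨v, hv⟩ := hG (fun k => if k = j then 1 else 0) (fun _ => 0)
    refine ⟨v, ?_⟩
    rw [← hv]; congr 1; ext ω
    simp [Nat.lt_succ_of_le hj]
  have hηL : ∀ j ≤ n, MemLp (η j) 2 ℙ := by
    intro j hj
    refine key _ (hη j) ?_
    obtain ⟨v, hv⟩ := hG (fun _ => 0) (fun k => if k = j then 1 else 0)
    refine ⟨v, ?_⟩
    rw [← hv]; congr 1; ext ω
    simp [Nat.lt_succ_of_le hj]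
  have i1 : Integrable (fun ω => W j ω * W l ω) ℙ := (hWL j hj).integrable_mul (hWL l hl)
  have i2 : Integrable (fun ω => W j ω * η l ω) ℙ := (hWL j hj).integrable_mul (hηL l hl)
  have i3 : Integrable (fun ω => W l ω * η j ω) ℙ := (hWL l hl).integrable_mul (hηL j hj)
  have i4 : Integrable (fun ω => η j ω * η l ω) ℙ := (hηL j hj).integrable_mul (hηL l hl)
  have e : (fun ω => obs σ τ W η j ω * obs σ τ W η l ω) = fun ω =>
      (σ ^ 2 * (W j ω * W l ω) + σ * τ * (W j ω * η l ω)) +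
      (σ * τ * (W l ω * η j ω) + τ ^ 2 * (η j ω * η l ω)) := by
    ext ω; simp only [obs]; ring
  have j1 := i1.const_mul (σ ^ 2)
  have j2 := i2.const_mul (σ * τ)
  have j3 := i3.const_mul (σ * τ)
  have j4 := i4.const_mul (τ ^ 2)
  rw [e]
  refine ⟨(j1.add j2).add (j3.add j4), ?_⟩
  rw [integral_add (by exact j1.add j2) (by exact j3.add j4), integral_add j1 j2, integral_add j3 j4]
  simp only [integral_const_mul]
  rw [hWW j l hj hl, hηη j l hj hl, hWη j l hj hl, hWη l j hl hj]
  ring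

lemma paf_expand {Ω : Type*} [MeasureSpace Ω]
    {n : ℕ} {W η : ℕ → Ω → ℝ} (h : IsSimplifiedModel n W η) (σ τ : ℝ) (lam : ℝ → ℝ)
    (m i k : ℕ) :
    ∫ ω, preAvg lam n m (obs σ τ W η) i ω * preAvg lam n m (obs σ τ W η) k ω =
      ((m : ℝ) / n) ^ 2 * ∑ j ∈ blockIdx n m i, ∑ l ∈ blockIdx n m k,
        lam ((m : ℝ) * j / n - ((i : ℝ) - 2)) * lam ((m : ℝ) * l / n - ((k : ℝ) - 2)) *
        (σ ^ 2 * ((min j l : ℝ) / n) + τ ^ 2 * (if j = l then 1 else 0)) := by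
  have hle : ∀ i, ∀ j ∈ blockIdx n m i, j ≤ n := by
    intro i j hj
    have := (Finset.mem_filter.1 hj).1
    rw [Finset.mem_range] at this; omega
  have e : (fun ω => preAvg lam n m (obs σ τ W η) i ω * preAvg lam n m (obs σ τ W η) k ω) =
      fun ω => ((m : ℝ) / n) ^ 2 * ∑ j ∈ blockIdx n m i, ∑ l ∈ blockIdx n m k,
        lam ((m : ℝ) * j / n - ((i : ℝ) - 2)) * lam ((m : ℝ) * l / n - ((k : ℝ) - 2)) *
        (obs σ τ W η j ω * obs σ τ W η l ω) := by
    ext ω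
    simp only [preAvg]
    rw [mul_mul_mul_comm, ← sq, Finset.sum_mul_sum]
    congr 1
    refine Finset.sum_congr rfl fun j _ => Finset.sum_congr rfl fun l _ => ?_
    ring
  rw [e, integral_const_mul, integral_finsetSum]
  · congr 1
    refine Finset.sum_congr rfl fun j hj => ?_
    rw [integral_finsetSum]
    · refine Finset.sum_congr rfl fun l hl => ?_
      rw [integral_const_mul, (paf_cov h σ τ (hle i j hj) (hle k l hl)).2]
    · intro l hl
      exact (paf_cov h σ τ (hle i j hj) (hle k l hl)).1.const_mul _
  · intro j hj
    refine integrable_finsetSum _ fun l hl => ?_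
    exact (paf_cov h σ τ (hle i j hj) (hle k l hl)).1.const_mul _

lemma paf_mOf {c : ℝ} (hc : 0 < c) : ∃ N : ℕ, ∀ n ≥ N, 0 < n ∧ 0 < mOf c n ∧ mOf c n ≤ n ∧
    (mOf c n : ℝ) ^ 2 ≤ 4 * c ^ 2 * n ∧ c ^ 2 * n ≤ 4 * (mOf c n : ℝ) ^ 2 := by
  obtain ⟨N, hN⟩ := exists_nat_ge ((2 * c + 2 / c + 1) ^ 2)
  refine ⟨N, fun n hn => ?_⟩
  have hs : 2 * c + 2 / c + 1 ≤ √n := by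
    apply Real.le_sqrt_of_sq_le
    exact hN.trans (by exact_mod_cast hn)
  have hcc : 0 < 2 / c := by positivity
  have hspos : 0 < √(n:ℝ) := by linarith
  have hn0 : (0:ℝ) < n := Real.sqrt_pos.1 hspos
  have hnn : √(n:ℝ) * √n = n := Real.mul_self_sqrt hn0.le
  set s := √(n:ℝ) with hsd
  have hsc : 2 ≤ s / c := by rw [le_div_iff₀ hc]; linarith
  have hsc0 : 0 ≤ s / c := by linarith
  set q := ⌊s / c⌋₊ with hq
  have q1 : (q:ℝ) ≤ s / c := Nat.floor_le hsc0
  have q2 : s / c < q + 1 := Nat.lt_floor_add_one _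
  have q3 : s / (2 * c) ≤ q := by
    have : s / (2 * c) = s / c / 2 := by field_simp
    rw [this]; linarith
  have qpos : (0:ℝ) < q := by linarith
  have qn : 0 < q := by exact_mod_cast qpos
  have hm : mOf c n = n / q := rfl
  have m1 : (mOf c n : ℝ) ≤ n / q := by rw [hm]; exact Nat.cast_div_le
  have m2 : (n:ℝ) / q < mOf c n + 1 := by
    rw [hm, div_lt_iff₀ qpos]
    have := Nat.lt_div_mul_add (a := n) qn
    have : (n:ℝ) < (n / q : ℕ) * q + q := by exact_mod_cast this
    linarith
  have u1 : (n:ℝ) / q ≤ 2 * c * s := by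
    rw [div_le_iff₀ qpos]
    have := mul_le_mul_of_nonneg_left q3 (show 0 ≤ 2 * c * s by positivity)
    have e : 2 * c * s * (s / (2 * c)) = n := by rw [← hnn]; field_simp
    linarith
  have u2 : c * s ≤ (n:ℝ) / q := by
    rw [le_div_iff₀ qpos]
    have := mul_le_mul_of_nonneg_left q1 (show 0 ≤ c * s by positivity)
    have e : c * s * (s / c) = n := by rw [← hnn]; field_simp
    linarith
  have u3 : 2 ≤ c * s := by
    have : c * (2 / c) ≤ c * s := by gcongr; linarith
    rwa [mul_div_cancel₀ _ hc.ne'] at this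
  have u4 : c * s ≤ 2 * mOf c n := by linarith
  refine ⟨by exact_mod_cast hn0, ?_, ?_, ?_, ?_⟩
  · have : (0:ℝ) < mOf c n := by linarith
    exact_mod_cast this
  · rw [hm]; exact Nat.div_le_self _ _
  · have h1 : (mOf c n : ℝ) ≤ 2 * c * s := m1.trans u1
    calc (mOf c n : ℝ) ^ 2 ≤ (2 * c * s) ^ 2 := by gcongr
      _ = 4 * c ^ 2 * (s * s) := by ring
      _ = _ := by rw [hnn]
  · calc c ^ 2 * n = (c * s) ^ 2 := by rw [← hnn]; ring
      _ ≤ (2 * (mOf c n : ℝ)) ^ 2 := by gcongr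
      _ = _ := by ring

set_option maxHeartbeats 1000000 in
lemma paf_main {lam : ℝ → ℝ} (hlam : IsPreAverageFn lam) (σ τ : ℝ) {c : ℝ} (hc : 0 < c) :
    ∃ C : ℝ, 0 < C ∧ ∃ N : ℕ, ∀ n ≥ N, ∀ i k : ℕ, 2 ≤ i → k ≤ mOf c n → i + 2 ≤ k →
      |((mOf c n : ℝ) / n) ^ 2 * ∑ j ∈ blockIdx n (mOf c n) i, ∑ l ∈ blockIdx n (mOf c n) k,
        lam ((mOf c n : ℝ) * j / n - ((i : ℝ) - 2)) *
          lam ((mOf c n : ℝ) * l / n - ((k : ℝ) - 2)) *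
        (σ ^ 2 * ((min j l : ℝ) / n) + τ ^ 2 * (if j = l then 1 else 0))| ≤ C / n := by
  obtain ⟨P, t, K, hP, h0, hP2, hmono, hL⟩ := hlam.piecewise_lipschitz
  obtain ⟨M, hM0, hM⟩ := paf_bounded h0 hP2 hL
  obtain ⟨N, hN⟩ := paf_mOf hc
  set C1 : ℝ := 3 * K + (P + 1) * (6 * M) with hC1
  have hC10 : 0 ≤ C1 := by positivity
  refine ⟨4 * c ^ 2 * (σ ^ 2 * ((M * 24 / c ^ 2 + C1) * C1) + τ ^ 2 * M ^ 2) + 1,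
    by positivity, N, ?_⟩
  intro n hn i k hi hk hik
  obtain ⟨hn0, hm0, hmn, hm1, hm2⟩ := hN n hn
  set m := mOf c n with hm
  have hn' : (0:ℝ) < n := by exact_mod_cast hn0
  have hm' : (0:ℝ) < m := by exact_mod_cast hm0
  have hmn' : (m:ℝ) ≤ n := by exact_mod_cast hmn
  obtain ⟨a, b, hB, han, ha, ha', hb, hb'⟩ := paf_blockIdx (i := i) hn0 hm0 hi (by omega)
  obtain ⟨a2, b2, hB2, han2, ha2, ha2', hb2, hb2'⟩ :=
    paf_blockIdx (i := k) hn0 hm0 (by omega) hk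
  have hδ : 0 < (m / n : ℝ) := by positivity
  have hδ1 : (m / n : ℝ) ≤ 1 := by rw [div_le_one hn']; exact hmn'
  have S1 := paf_sum_bound h0 hP2 hL hM0 hM hlam.antisymm hδ hδ1 ha ha' hb hb'
  have S2 := paf_sum_bound h0 hP2 hL hM0 hM hlam.antisymm hδ hδ1 ha2 ha2' hb2 hb2'
  have er : ∀ j : ℕ, (m:ℝ) * j / n = (m / n : ℝ) * j := fun j => by ring
  simp only [er]
  -- order of indices
  have hik' : (i:ℝ) ≤ k - 2 := by
    have : ((i + 2 : ℕ):ℝ) ≤ k := by exact_mod_cast hik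
    push_cast at this; linarith
  have hjl : ∀ j ∈ blockIdx n m i, ∀ l ∈ blockIdx n m k, (j:ℝ) ≤ l := by
    intro j hj l hl
    have h1 := (Finset.mem_filter.1 hj).2.2
    have h2 := (Finset.mem_filter.1 hl).2.1
    have h3 : (i:ℝ) / m ≤ (k - 2) / m := by gcongr
    have h4 : (j:ℝ) / n ≤ l / n := by linarith
    rwa [div_le_div_iff_of_pos_right hn'] at h4
  rw [hB, hB2] at *
  set δ : ℝ := (m / n : ℝ) with hδd
  set f : ℕ → ℝ := fun j => lam (δ * j - ((i:ℝ) - 2)) with hf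
  set g : ℕ → ℝ := fun l => lam (δ * l - ((k:ℝ) - 2)) with hg
  have hx1 : ∀ j ∈ Finset.Icc a b, (a:ℝ) ≤ j ∧ (j:ℝ) ≤ b := by
    intro j hj
    rw [Finset.mem_Icc] at hj
    exact ⟨by exact_mod_cast hj.1, by exact_mod_cast hj.2⟩
  have hfM : ∀ j ∈ Finset.Icc a b, |f j| ≤ M := by
    intro j hj
    obtain ⟨g1, g2⟩ := hx1 j hj
    have g3 : δ * (a:ℝ) ≤ δ * j := by gcongr
    have g4 : δ * (j:ℝ) ≤ δ * b := by gcongr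
    exact hM _ (by linarith) (by linarith)
  have hgM : ∀ j ∈ Finset.Icc a2 b2, |g j| ≤ M := by
    intro j hj
    rw [Finset.mem_Icc] at hj
    have g1 : (a2:ℝ) ≤ j := by exact_mod_cast hj.1
    have g2 : (j:ℝ) ≤ b2 := by exact_mod_cast hj.2
    have g3 : δ * (a2:ℝ) ≤ δ * j := by gcongr
    have g4 : δ * (j:ℝ) ≤ δ * b2 := by gcongr
    exact hM _ (by linarith) (by linarith)
  have esum : ∑ j ∈ Finset.Icc a b, ∑ l ∈ Finset.Icc a2 b2, f j * g l *
        (σ ^ 2 * ((min j l : ℝ) / n) + τ ^ 2 * (if j = l then 1 else 0)) =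
      σ ^ 2 * ((∑ j ∈ Finset.Icc a b, f j * (j / n)) * ∑ l ∈ Finset.Icc a2 b2, g l) +
      τ ^ 2 * ∑ j ∈ Finset.Icc a b ∩ Finset.Icc a2 b2, f j * g j := by
    rw [Finset.sum_mul_sum, ← Finset.filter_mem_eq_inter, Finset.sum_filter, Finset.mul_sum,
      Finset.mul_sum, ← Finset.sum_add_distrib]
    refine Finset.sum_congr rfl fun j hj => ?_
    rw [← Finset.sum_ite_eq (Finset.Icc a2 b2) j (fun l => f j * g l), Finset.mul_sum,
      Finset.mul_sum, ← Finset.sum_add_distrib]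
    refine Finset.sum_congr rfl fun l hl => ?_
    rw [min_eq_left (hjl j hj l hl)]
    split_ifs <;> ring
  have T1 : |∑ j ∈ Finset.Icc a b, f j * (j / n)| ≤ M * 24 / c ^ 2 + C1 := by
    have e : ∑ j ∈ Finset.Icc a b, f j * (j / n) =
        ∑ j ∈ Finset.Icc a b, f j * ((j - a) / n) + (a / n) * ∑ j ∈ Finset.Icc a b, f j := by
      rw [Finset.mul_sum, ← Finset.sum_add_distrib]
      refine Finset.sum_congr rfl fun j _ => ?_
      ring
    rw [e]
    refine (abs_add_le _ _).trans (add_le_add ?_ ?_)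
    · have hab : (a:ℝ) ≤ b := by
        have : δ * (a:ℝ) ≤ δ * b := by linarith
        exact le_of_mul_le_mul_left this hδ
      have habn : a ≤ b := by exact_mod_cast hab
      have hba : (b:ℝ) - a ≤ 2 / δ := by rw [le_div_iff₀ hδ]; nlinarith
      have hba2 : (b:ℝ) + 1 - a ≤ 3 / δ := by rw [le_div_iff₀ hδ]; nlinarith
      have hb1 : ∀ j ∈ Finset.Icc a b, |f j * ((j - a) / n)| ≤ M * (2 / δ / n) := by
        intro j hj
        obtain ⟨g1, g2⟩ := hx1 j hj
        have nn : 0 ≤ ((j:ℝ) - a) / n := div_nonneg (by linarith) hn'.le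
        rw [abs_mul, abs_of_nonneg nn]
        have : ((j:ℝ) - a) / n ≤ 2 / δ / n := by gcongr; linarith
        exact mul_le_mul (hfM j hj) this nn hM0
      refine (Finset.abs_sum_le_sum_abs _ _).trans ((Finset.sum_le_sum hb1).trans ?_)
      rw [Finset.sum_const, nsmul_eq_mul, Nat.card_Icc, Nat.cast_sub (by omega)]
      push_cast
      have : ((b:ℝ) + 1 - a) * (M * (2 / δ / n)) ≤ 3 / δ * (M * (2 / δ / n)) := by gcongr
      refine this.trans ?_
      have e2 : 3 / δ * (M * (2 / δ / n)) = M * 6 * (n / m ^ 2) := by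
        rw [hδd]; field_simp; ring
      rw [e2]
      have : (n:ℝ) / m ^ 2 ≤ 4 / c ^ 2 := by
        rw [div_le_div_iff₀ (by positivity) (by positivity)]; linarith
      calc M * 6 * ((n:ℝ) / m ^ 2) ≤ M * 6 * (4 / c ^ 2) := by gcongr
        _ = _ := by ring
    · rw [abs_mul]
      have g1 : |(a:ℝ) / n| ≤ 1 := by
        rw [abs_of_nonneg (by positivity), div_le_one hn']; exact_mod_cast han
      calc _ ≤ 1 * C1 := mul_le_mul g1 S1 (abs_nonneg _) zero_le_one
        _ = C1 := one_mul _
  have T2 : |∑ j ∈ Finset.Icc a b ∩ Finset.Icc a2 b2, f j * g j| ≤ M ^ 2 := by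
    have hcard : (Finset.Icc a b ∩ Finset.Icc a2 b2).card ≤ 1 := by
      rw [Finset.card_le_one]
      intro x hx y hy
      rw [Finset.mem_inter] at hx hy
      have h1 := hjl x hx.1 y hy.2
      have h2 := hjl y hy.1 x hx.2
      have : (x:ℝ) = y := le_antisymm h1 h2
      exact_mod_cast this
    have hb1 : ∀ j ∈ Finset.Icc a b ∩ Finset.Icc a2 b2, |f j * g j| ≤ M ^ 2 := by
      intro j hj
      rw [Finset.mem_inter] at hj
      rw [abs_mul, sq]
      exact mul_le_mul (hfM j hj.1) (hgM j hj.2) (abs_nonneg _) hM0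
    refine (Finset.abs_sum_le_sum_abs _ _).trans ((Finset.sum_le_sum hb1).trans ?_)
    rw [Finset.sum_const, nsmul_eq_mul]
    have : ((Finset.Icc a b ∩ Finset.Icc a2 b2).card : ℝ) ≤ 1 := by exact_mod_cast hcard
    have := mul_le_mul_of_nonneg_right this (sq_nonneg M)
    linarith
  rw [esum, abs_mul, abs_of_nonneg (sq_nonneg δ)]
  have T3 : |σ ^ 2 * ((∑ j ∈ Finset.Icc a b, f j * (j / n)) * ∑ l ∈ Finset.Icc a2 b2, g l) +
      τ ^ 2 * ∑ j ∈ Finset.Icc a b ∩ Finset.Icc a2 b2, f j * g j| ≤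
      σ ^ 2 * ((M * 24 / c ^ 2 + C1) * C1) + τ ^ 2 * M ^ 2 := by
    refine (abs_add_le _ _).trans (add_le_add ?_ ?_)
    · rw [abs_mul, abs_of_nonneg (sq_nonneg σ), abs_mul]
      refine mul_le_mul_of_nonneg_left ?_ (sq_nonneg σ)
      exact mul_le_mul T1 S2 (abs_nonneg _) (by positivity)
    · rw [abs_mul, abs_of_nonneg (sq_nonneg τ)]
      exact mul_le_mul_of_nonneg_left T2 (sq_nonneg τ)
  have hδ2 : δ ^ 2 ≤ 4 * c ^ 2 / n := by
    rw [hδd, div_pow, div_le_div_iff₀ (by positivity) hn']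
    have h1 := mul_le_mul_of_nonneg_right hm1 hn'.le
    calc (m:ℝ) ^ 2 * n ≤ 4 * c ^ 2 * n * n := h1
      _ = 4 * c ^ 2 * (n:ℝ) ^ 2 := by ring
  have T4 := mul_le_mul hδ2 T3 (abs_nonneg _) (by positivity)
  refine T4.trans ?_
  rw [div_mul_eq_mul_div]
  gcongr
  linarith

theorem preAveragedObs_nonoverlapping_covariance (σ τ c : ℝ) (hσ : 0 < σ) (hτ : 0 < τ) (hc : 0 < c)
    (lam : ℝ → ℝ) (hlam : IsPreAverageFn lam)
    (Ω : ℕ → Type*) [∀ n, MeasureSpace (Ω n)] [∀ n, IsProbabilityMeasure (ℙ : Measure (Ω n))]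
    (W η : (n : ℕ) → ℕ → Ω n → ℝ)
    (hmodel : ∀ n, IsSimplifiedModel n (W n) (η n)) :
    ∃ C > 0, ∃ N : ℕ, ∀ n ≥ N, ∀ i k : ℕ, 2 ≤ i → i ≤ mOf c n → 2 ≤ k → k ≤ mOf c n →
      2 ≤ |(i : ℤ) - (k : ℤ)| →
      |∫ ω, preAvg lam n (mOf c n) (obs σ τ (W n) (η n)) i ω *
            preAvg lam n (mOf c n) (obs σ τ (W n) (η n)) k ω| ≤ C / n := by
  obtain ⟨C, hC, N, hN⟩ := paf_main hlam σ τ hc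
  refine ⟨C, hC, N, ?_⟩
  intro n hn i k hi him hk hkm hik
  rcases le_abs.1 hik with h | h
  · have h1 := hN n hn k i hk him (by omega)
    rw [← paf_expand (hmodel n) σ τ lam (mOf c n) k i] at h1
    simpa only [mul_comm] using h1
  · have h1 := hN n hn i k hi hkm (by omega)
    rw [← paf_expand (hmodel n) σ τ lam (mOf c n) i k] at h1
    exact h1
end
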